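/- arXiv:1408.5510 — 9 statements merged into one kernel-verified Lean document; each statement's English description precedes it below -/
import Mathlib

section
/- The local and global formulations of robust no-arbitrage of the second kind are equivalent: NA2(𝒫) holds if and only if NA2(𝒫)′ holds, where NA2(𝒫)′ states that for all t ∈ {0,…,T−1}, all ℱ_t-measurable ζ : Ω_t → ℝ^d, and every trading strategy ξ (an adapted process ξ = (ξ_0,…,ξ_T) with each ξ_s : Ω_s → ℝ^d ℱ_s-measurable and ξ_s(ω) ∈ −K_s(ω) for all ω and all s), if ζ + ξ_{t+1} + ⋯ + ξ_T ∈ K_T 𝒫-q.s. then ζ ∈ K_t 𝒫-q.s. -/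
/-!
The equivalence rests on two observations about the closed convex cones `K_s`.

* Local to global: if `ζ + ξ_{t+1} + ⋯ + ξ_{s+1} ∈ K_{s+1}` quasi surely, then adding
  `-ξ_{s+1} ∈ K_{s+1}` (a convex cone is stable under addition, `cone_add_mem`) gives
  `ζ + ξ_{t+1} + ⋯ + ξ_s ∈ K_{s+1}` quasi surely. This vector is known at time `s`, so the local
  condition moves it into `K_s`. Descending from `s = T` to `s = t` yields `ζ ∈ K_t`.
* Global to local: if `ζ ∈ K_{t+1}` quasi surely, the strategy that liquidates `ζ` at time `t + 1`
  (`ξ_{t+1} = -ζ` where `ζ ∈ K_{t+1}`, and zero trades otherwise) leaves the terminal position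
  `0 ∈ K_T` quasi surely, so the global condition gives `ζ ∈ K_t`. This strategy is admissible because
  `{ζ ∈ K_{t+1}}` is universally measurable (`umSet_mem_randomSet`).
-/

open Finset MeasureTheory
open scoped NNReal

noncomputable section

/-- A set is universally measurable if it is null-measurable for every Borel
probability measure, i.e. belongs to every completion of the Borel σ-field. -/
def UMSet {α : Type*} [MeasurableSpace α] (s : Set α) : Prop :=
  ∀ μ : Measure α, IsProbabilityMeasure μ → NullMeasurableSet s μ

/-- A function is measurable for the universal completion of the Borel σ-field
iff it is universally measurable. -/
def UMeasurable {α β : Type*} [MeasurableSpace α] [MeasurableSpace β] (f : α → β) : Prop :=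
  ∀ B : Set β, MeasurableSet B → UMSet (f ⁻¹' B)

/-- Convexity of a set of probability measures. -/
def ConvexPM {α : Type*} [MeasurableSpace α] (S : Set (ProbabilityMeasure α)) : Prop :=
  ∀ P ∈ S, ∀ Q ∈ S, ∀ a : ℝ≥0, a ≤ 1 →
    ∃ R ∈ S, (R : Measure α) = a • (P : Measure α) + (1 - a) • (Q : Measure α)

/-- Restriction of a path `ω ∈ Ω₁^T` to its first `t` coordinates. -/
def resProj {Ω₁ : Type} [Nonempty Ω₁] (T t : ℕ) (ω : Fin T → Ω₁) : Fin t → Ω₁ :=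
  fun i => if h : (i : ℕ) < T then ω ⟨i, h⟩ else Classical.arbitrary Ω₁

/-- The Fubini product `P₀ ⊗ P₁ ⊗ ⋯ ⊗ P_{t-1}` of one-step kernels. -/
def fubiniProd {Ω₁ : Type} [MeasurableSpace Ω₁]
    (pk : (t : ℕ) → (Fin t → Ω₁) → Measure Ω₁) : (t : ℕ) → Measure (Fin t → Ω₁)
  | 0 => Measure.dirac (fun i => i.elim0)
  | (t + 1) => (fubiniProd pk t).bind fun ω => (pk t ω).map (Fin.snoc ω)

/-- The family `𝒫` of all Fubini products of universally measurable selectors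
of the one-step model sets `𝒫_t`. -/
def PModels {Ω₁ : Type} [MeasurableSpace Ω₁] (T : ℕ)
    (Pt : (t : ℕ) → (Fin t → Ω₁) → Set (ProbabilityMeasure Ω₁)) :
    Set (Measure (Fin T → Ω₁)) :=
  {P | ∃ pk : (t : ℕ) → (Fin t → Ω₁) → ProbabilityMeasure Ω₁,
    (∀ t, t < T → ∀ ω, pk t ω ∈ Pt t ω) ∧
    (∀ t, t < T → UMeasurable fun ω => (pk t ω : Measure Ω₁)) ∧
    P = fubiniProd (fun t ω => (pk t ω : Measure Ω₁)) T}

/-- Robust no-arbitrage of the second kind, `NA2(𝒫)` (local formulation). -/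
def NA2 (d T : ℕ) (Ω₁ : Type) [MeasurableSpace Ω₁] [Nonempty Ω₁]
    (K : (t : ℕ) → (Fin t → Ω₁) → Set (Fin d → ℝ))
    (𝒫fam : Set (Measure (Fin T → Ω₁))) : Prop :=
  ∀ t, t < T → ∀ ζ : (Fin t → Ω₁) → Fin d → ℝ, UMeasurable ζ →
    (∀ P ∈ 𝒫fam,
      P {ω | ζ (resProj T t ω) ∉ K (t + 1) (resProj T (t + 1) ω)} = 0) →
    ∀ P ∈ 𝒫fam, P {ω | ζ (resProj T t ω) ∉ K t (resProj T t ω)} = 0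

/-- The global formulation `NA2(𝒫)′`: for every trading strategy `ξ` (an
adapted process with `ξ_s ∈ −K_s`), if `ζ + ξ_{t+1} + ⋯ + ξ_T ∈ K_T` `𝒫`-q.s.
then `ζ ∈ K_t` `𝒫`-q.s. -/
def NA2' (d T : ℕ) (Ω₁ : Type) [MeasurableSpace Ω₁] [Nonempty Ω₁]
    (K : (t : ℕ) → (Fin t → Ω₁) → Set (Fin d → ℝ))
    (𝒫fam : Set (Measure (Fin T → Ω₁))) : Prop :=
  ∀ t, t < T → ∀ ζ : (Fin t → Ω₁) → Fin d → ℝ, UMeasurable ζ →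
    ∀ ξ : (s : ℕ) → (Fin s → Ω₁) → Fin d → ℝ,
      (∀ s, s ≤ T → UMeasurable (ξ s)) →
      (∀ s, s ≤ T → ∀ ω, ξ s ω ∈ -K s ω) →
      (∀ P ∈ 𝒫fam,
        P {ω | ζ (resProj T t ω) +
            ∑ s ∈ Finset.Icc (t + 1) T, ξ s (resProj T s ω)
          ∉ K T (resProj T T ω)} = 0) →
      ∀ P ∈ 𝒫fam, P {ω | ζ (resProj T t ω) ∉ K t (resProj T t ω)} = 0

lemma umeasurable_iff_aemeasurable {α β : Type*} [MeasurableSpace α] [MeasurableSpace β]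
    [MeasurableSpace.CountablyGenerated β] [Nonempty β] {f : α → β} :
    UMeasurable f ↔ ∀ μ : Measure α, IsProbabilityMeasure μ → AEMeasurable f μ := by
  constructor
  · intro h μ hμ
    exact NullMeasurable.aemeasurable fun B hB => h B hB μ hμ
  · intro h B hB μ hμ
    exact (h μ hμ).nullMeasurable hB

lemma UMeasurable.comp_measurable {α β γ : Type*} [MeasurableSpace α] [MeasurableSpace β]
    [MeasurableSpace γ] {f : β → γ} (hf : UMeasurable f) {g : α → β} (hg : Measurable g) :
    UMeasurable (f ∘ g) := by
  intro B hB μ hμ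
  have : IsProbabilityMeasure (μ.map g) := Measure.isProbabilityMeasure_map hg.aemeasurable
  exact (hf B hB (μ.map g) this).preimage (hg.measurePreserving μ).quasiMeasurePreserving

lemma measurable_resProj {Ω₁ : Type} [Nonempty Ω₁] [MeasurableSpace Ω₁] (T t : ℕ) :
    Measurable (resProj (Ω₁ := Ω₁) T t) := by
  refine measurable_pi_lambda _ fun i => ?_
  unfold resProj
  by_cases h : (i : ℕ) < T
  · simpa [h] using measurable_pi_apply _
  · simp [h]

lemma resProj_resProj {Ω₁ : Type} [Nonempty Ω₁] {T s t : ℕ} (hts : t ≤ s)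
    (ω : Fin T → Ω₁) : resProj s t (resProj T s ω) = resProj T t ω := by
  funext i
  have : (i : ℕ) < s := i.2.trans_le hts
  simp [resProj, this]

/-- For a closed-valued measurable random set `K`, membership `f ω ∈ K ω` is a measurable event:
it says that for every `n` some point `q` of a countable dense set is within `1 / (n + 1)` of both
`f ω` and `K ω`. -/
lemma measurableSet_mem_randomSet {α E : Type*} [MeasurableSpace α] [PseudoMetricSpace E]
    [TopologicalSpace.SeparableSpace E] [Nonempty E] [MeasurableSpace E] [BorelSpace E]
    {K : α → Set E}
    (hKmeas : ∀ C : Set E, IsClosed C → MeasurableSet {ω | (K ω ∩ C).Nonempty})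
    (hKclosed : ∀ ω, IsClosed (K ω)) {f : α → E} (hf : Measurable f) :
    MeasurableSet {ω | f ω ∈ K ω} := by
  have heq : {ω | f ω ∈ K ω} = ⋂ n : ℕ, ⋃ m : ℕ,
      (f ⁻¹' Metric.closedBall (TopologicalSpace.denseSeq E m) (1 / (n + 1)) ∩
        {ω | (K ω ∩ Metric.closedBall (TopologicalSpace.denseSeq E m)
          (1 / ((n : ℝ) + 1))).Nonempty}) := by
    ext ω
    simp only [Set.mem_iInter, Set.mem_iUnion]
    constructor
    · intro h n
      obtain ⟨m, hm⟩ := (TopologicalSpace.denseRange_denseSeq E).exists_dist_lt (f ω)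
        (Nat.one_div_pos_of_nat (α := ℝ) (n := n))
      exact ⟨m, hm.le, f ω, h, hm.le⟩
    · intro h
      change f ω ∈ K ω
      rw [← (hKclosed ω).closure_eq, Metric.mem_closure_iff]
      intro ε hε
      obtain ⟨n, hn⟩ := exists_nat_one_div_lt (half_pos hε)
      obtain ⟨m, h1, y, hy, h2⟩ := h n
      refine ⟨y, hy, ?_⟩
      have h3 : dist (f ω) (TopologicalSpace.denseSeq E m) ≤ 1 / ((n : ℝ) + 1) := h1
      have h4 : dist y (TopologicalSpace.denseSeq E m) ≤ 1 / ((n : ℝ) + 1) := h2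
      have := dist_triangle_right (f ω) y (TopologicalSpace.denseSeq E m)
      linarith
  rw [heq]
  exact MeasurableSet.iInter fun n => MeasurableSet.iUnion fun m =>
    (hf Metric.isClosed_closedBall.measurableSet).inter (hKmeas _ Metric.isClosed_closedBall)

lemma umSet_mem_randomSet {α : Type*} [MeasurableSpace α] {d : ℕ} {K : α → Set (Fin d → ℝ)}
    (hKmeas : ∀ C : Set (Fin d → ℝ), IsClosed C → MeasurableSet {ω | (K ω ∩ C).Nonempty})
    (hKclosed : ∀ ω, IsClosed (K ω)) {f : α → Fin d → ℝ} (hf : UMeasurable f) :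
    UMSet {ω | f ω ∈ K ω} := by
  intro μ hμ
  have hfμ := umeasurable_iff_aemeasurable.1 hf μ hμ
  refine (measurableSet_mem_randomSet hKmeas hKclosed hfμ.measurable_mk).nullMeasurableSet.congr ?_
  filter_upwards [hfμ.ae_eq_mk] with ω hω
  exact congrArg (· ∈ K ω) hω.symm

lemma cone_add_mem {E : Type*} [AddCommGroup E] [Module ℝ E] {C : Set E} (hconv : Convex ℝ C)
    (hcone : ∀ x ∈ C, ∀ a : ℝ, 0 ≤ a → a • x ∈ C) {x y : E} (hx : x ∈ C) (hy : y ∈ C) :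
    x + y ∈ C := by
  have h := hcone _ (hconv hx hy (a := 1 / 2) (b := 1 / 2) (by norm_num) (by norm_num)
    (by norm_num)) 2 (by norm_num)
  simpa [smul_add, smul_smul] using h

/-- The time-`s` position `ζ + ξ_{t+1} + ⋯ + ξ_s` is universally measurable at time `s`. -/
lemma umeasurable_position {Ω₁ : Type} [MeasurableSpace Ω₁] [Nonempty Ω₁] {d t s : ℕ}
    {ζ : (Fin t → Ω₁) → Fin d → ℝ} (hζ : UMeasurable ζ)
    {ξ : (r : ℕ) → (Fin r → Ω₁) → Fin d → ℝ} (hξ : ∀ r, r ≤ s → UMeasurable (ξ r)) :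
    UMeasurable fun ω : Fin s → Ω₁ =>
      ζ (resProj s t ω) + ∑ r ∈ Finset.Icc (t + 1) s, ξ r (resProj s r ω) := by
  refine umeasurable_iff_aemeasurable.2 fun μ hμ => ?_
  refine (umeasurable_iff_aemeasurable.1 (hζ.comp_measurable (measurable_resProj s t)) μ hμ).add ?_
  refine Finset.aemeasurable_fun_sum _ fun r hr => ?_
  exact umeasurable_iff_aemeasurable.1
    ((hξ r (Finset.mem_Icc.1 hr).2).comp_measurable (measurable_resProj s r)) μ hμ

/-- Remark 2.4: the local and global formulations of robust
no-arbitrage of the second kind are equivalent: `NA2(𝒫) ↔ NA2(𝒫)′`. -/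
theorem na2_iff_na2' (d T : ℕ) (hd : 1 ≤ d) (hT : 1 ≤ T)
    (Ω₁ : Type) [TopologicalSpace Ω₁] [PolishSpace Ω₁] [MeasurableSpace Ω₁]
    [BorelSpace Ω₁] [Nonempty Ω₁]
    (Pt : (t : ℕ) → (Fin t → Ω₁) → Set (ProbabilityMeasure Ω₁))
    (hPtne : ∀ t, t < T → ∀ ω, (Pt t ω).Nonempty)
    (hPtconv : ∀ t, t < T → ∀ ω, ConvexPM (Pt t ω))
    (hPtgraph : ∀ t, t < T → AnalyticSet
      {p : (Fin t → Ω₁) × ProbabilityMeasure Ω₁ | p.2 ∈ Pt t p.1})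
    (K : (t : ℕ) → (Fin t → Ω₁) → Set (Fin d → ℝ))
    (hKmeas : ∀ t, t ≤ T → ∀ C : Set (Fin d → ℝ), IsClosed C →
      MeasurableSet {ω : Fin t → Ω₁ | (K t ω ∩ C).Nonempty})
    (hKclosed : ∀ t, t ≤ T → ∀ ω, IsClosed (K t ω))
    (hKconv : ∀ t, t ≤ T → ∀ ω, Convex ℝ (K t ω))
    (hKcone : ∀ t, t ≤ T → ∀ ω, ∀ x ∈ K t ω, ∀ a : ℝ, 0 ≤ a → a • x ∈ K t ω)
    (hKorth : ∀ t, t ≤ T → ∀ ω, {x : Fin d → ℝ | ∀ i, 0 ≤ x i} ⊆ K t ω) :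
    NA2 d T Ω₁ K (PModels T Pt) ↔ NA2' d T Ω₁ K (PModels T Pt) := by
  classical
  constructor
  · intro h t ht ζ hζ ξ hξ hξK hT'
    -- Backward induction: the time-`s` position lies in `K_s` for `s = T, T - 1, …, t`.
    have key : ∀ s, t ≤ s → s ≤ T → ∀ P ∈ PModels T Pt,
        P {ω | ζ (resProj T t ω) + ∑ r ∈ Finset.Icc (t + 1) s, ξ r (resProj T r ω)
          ∉ K s (resProj T s ω)} = 0 := by
      intro s hts hsT
      induction hsT using Nat.decreasingInduction with
      | self => exact hT'
      | of_succ s hs ih =>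
        have hpos : ∀ ω : Fin T → Ω₁,
            ζ (resProj s t (resProj T s ω)) +
              ∑ r ∈ Finset.Icc (t + 1) s, ξ r (resProj s r (resProj T s ω)) =
            ζ (resProj T t ω) + ∑ r ∈ Finset.Icc (t + 1) s, ξ r (resProj T r ω) := by
          intro ω
          rw [resProj_resProj hts]
          congr 1
          refine Finset.sum_congr rfl fun r hr => ?_
          rw [resProj_resProj (Finset.mem_Icc.1 hr).2]
        have h1 := h s hs _ (umeasurable_position hζ fun r hr => hξ r (hr.trans hs.le))
        simp only [hpos] at h1
        refine h1 fun P hP => measure_mono_null ?_ (ih (by omega) P hP)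
        intro ω hω hmem
        apply hω
        rw [Finset.sum_Icc_succ_top (by omega)] at hmem
        have h2 := cone_add_mem (hKconv (s + 1) hs _) (hKcone (s + 1) hs _) hmem
          (hξK (s + 1) hs (resProj T (s + 1) ω))
        convert h2 using 1
        abel
    simpa using key t le_rfl ht.le
  · intro h t ht ζ hζ hζK
    let A : Set (Fin (t + 1) → Ω₁) := {ω | ζ (resProj (t + 1) t ω) ∈ K (t + 1) ω}
    have hζ' := hζ.comp_measurable (measurable_resProj (Ω₁ := Ω₁) (t + 1) t)
    have hA : UMSet A := umSet_mem_randomSet (hKmeas _ ht) (hKclosed _ ht) hζ'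
    have h0 : ∀ s, s ≤ T → ∀ ω, (0 : Fin d → ℝ) ∈ K s ω := fun s hs ω =>
      hKorth s hs ω fun _ => le_rfl
    -- `ξ` liquidates `ζ` at time `t + 1` on `A`. Off `A`, where `-ζ` need not be an admissible
    -- trade, and at all other times, it trades nothing.
    let η : (Fin (t + 1) → Ω₁) → Fin d → ℝ :=
      A.indicator fun ω => -ζ (resProj (t + 1) t ω)
    let ξ : (s : ℕ) → (Fin s → Ω₁) → Fin d → ℝ := fun s =>
      if hs : s = t + 1 then hs ▸ η else 0
    have hξη : ξ (t + 1) = η := by simp [ξ]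
    have hξ0 : ∀ s, s ≠ t + 1 → ξ s = 0 := fun s hs => by simp [ξ, hs]
    have hη : UMeasurable η := umeasurable_iff_aemeasurable.2 fun μ hμ =>
      (umeasurable_iff_aemeasurable.1 hζ' μ hμ).neg.indicator₀ (hA μ hμ)
    refine h t ht ζ hζ ξ ?_ ?_ ?_
    · intro s _
      by_cases hs : s = t + 1
      · subst hs
        rwa [hξη]
      · rw [hξ0 s hs]
        exact umeasurable_iff_aemeasurable.2 fun μ _ => aemeasurable_const
    · intro s hsT ω
      by_cases hs : s = t + 1
      · subst hs
        rw [hξη, Set.mem_neg]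
        by_cases hω : ω ∈ A
        · rw [show η ω = -ζ (resProj (t + 1) t ω) from Set.indicator_of_mem hω _, neg_neg]
          exact hω
        · simpa [η, hω] using h0 _ hsT ω
      · simpa [hξ0 s hs] using h0 s hsT ω
    · intro P hP
      refine measure_mono_null ?_ (hζK P hP)
      intro ω hω hmem
      apply hω
      have hωA : resProj T (t + 1) ω ∈ A := by
        change ζ (resProj (t + 1) t (resProj T (t + 1) ω)) ∈ K (t + 1) (resProj T (t + 1) ω)
        rwa [resProj_resProj (Nat.le_succ t)]
      rw [Finset.sum_eq_single_of_mem (t + 1) (Finset.mem_Icc.2 ⟨le_rfl, ht⟩)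
        fun s _ hs => by rw [hξ0 s hs]; rfl, hξη]
      simpa [η, hωA, resProj_resProj] using h0 T le_rfl _

end
end

section
/- The set Λ := {x ∈ ℝ^d : x ∈ K(·) 𝒬-q.s.} is a closed convex cone containing the origin, and it has the following maximality property: if A ⊂ ℝ^d is a closed set such that A ⊂ K(·) 𝒬-q.s. (i.e. there is a 𝒬-polar set N with A ⊂ K(ω̃) for every ω̃ ∉ N), then A ⊂ Λ. -/
/-! A subset of a polar set is polar and a countable union of polar sets is polar. Each closure
property of `Λ` then passes from the sets `K ω`: if a point `x` lies in `K ω` whenever countably many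
given points of `Λ` do, then `x ∈ Λ`, since `{ω | x ∉ K ω}` is covered by the countably many polar
sets where one of the given points is missed. For convexity two points are needed, for the cone
property one, and for closedness a sequence. Maximality is immediate: `x ∈ A` gives
`{ω | x ∉ K ω} ⊆ N`. -/

open MeasureTheory

noncomputable section

/-- A set `N` is `𝒬`-polar if it is contained in a Borel set which is `P`-null
for every `P ∈ 𝒬`. -/
def QPolar {α : Type*} [MeasurableSpace α]
    (𝒬 : Set (ProbabilityMeasure α)) (N : Set α) : Prop :=
  ∃ B : Set α, MeasurableSet B ∧ N ⊆ B ∧ ∀ P ∈ 𝒬, (P : Measure α) B = 0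

/-- `Λ = {x ∈ ℝ^d : x ∈ K(·) 𝒬-q.s.}`. -/
def LambdaSet {d : ℕ} {α : Type*} [MeasurableSpace α]
    (𝒬 : Set (ProbabilityMeasure α)) (K : α → Set (Fin d → ℝ)) : Set (Fin d → ℝ) :=
  {x | QPolar 𝒬 {ω | x ∉ K ω}}

theorem QPolar.mono {α : Type*} [MeasurableSpace α] {𝒬 : Set (ProbabilityMeasure α)}
    {M N : Set α} (hN : QPolar 𝒬 N) (h : M ⊆ N) : QPolar 𝒬 M := by
  obtain ⟨B, hB, hNB, hP⟩ := hN
  exact ⟨B, hB, h.trans hNB, hP⟩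

theorem QPolar.empty {α : Type*} [MeasurableSpace α] (𝒬 : Set (ProbabilityMeasure α)) :
    QPolar 𝒬 ∅ :=
  ⟨∅, MeasurableSet.empty, subset_rfl, fun _ _ => measure_empty⟩

theorem QPolar.iUnion {α ι : Type*} [Countable ι] [MeasurableSpace α]
    {𝒬 : Set (ProbabilityMeasure α)} {N : ι → Set α} (hN : ∀ i, QPolar 𝒬 (N i)) :
    QPolar 𝒬 (⋃ i, N i) := by
  choose B hB hNB hP using hN
  exact ⟨⋃ i, B i, MeasurableSet.iUnion hB, Set.iUnion_mono hNB,
    fun P hPQ => measure_iUnion_null fun i => hP i P hPQ⟩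

/-- A point that belongs to `K ω` whenever all of countably many points of `Λ` do is in `Λ`. -/
theorem mem_LambdaSet_of_countable {d : ℕ} {α ι : Type*} [Countable ι] [MeasurableSpace α]
    {𝒬 : Set (ProbabilityMeasure α)} {K : α → Set (Fin d → ℝ)} {u : ι → Fin d → ℝ}
    {x : Fin d → ℝ} (hu : ∀ i, u i ∈ LambdaSet 𝒬 K)
    (h : ∀ ω, (∀ i, u i ∈ K ω) → x ∈ K ω) : x ∈ LambdaSet 𝒬 K := by
  refine (QPolar.iUnion hu).mono fun ω hω => ?_
  by_contra hc
  simp only [Set.mem_iUnion, Set.mem_ofPred_eq, not_exists, not_not] at hc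
  exact hω (h ω hc)

/-- `Λ` is a closed convex cone containing the origin, and it is
maximal among closed sets contained in `K(·)` 𝒬-quasi-surely. -/
theorem lambda_closed_convex_cone_maximal (d : ℕ) (hd : 1 ≤ d)
    (Ω₁ : Type) [TopologicalSpace Ω₁] [PolishSpace Ω₁] [MeasurableSpace Ω₁]
    [BorelSpace Ω₁] [Nonempty Ω₁]
    (𝒬 : Set (ProbabilityMeasure Ω₁)) (h𝒬 : 𝒬.Nonempty)
    (K : Ω₁ → Set (Fin d → ℝ))
    (hKmeas : ∀ C : Set (Fin d → ℝ), IsClosed C →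
      MeasurableSet {ω | (K ω ∩ C).Nonempty})
    (hKclosed : ∀ ω, IsClosed (K ω))
    (hKconv : ∀ ω, Convex ℝ (K ω))
    (hKne : ∀ ω, (K ω).Nonempty)
    (hKcone : ∀ ω, ∀ x ∈ K ω, ∀ a : ℝ, 0 ≤ a → a • x ∈ K ω) :
    IsClosed (LambdaSet 𝒬 K) ∧
    Convex ℝ (LambdaSet 𝒬 K) ∧
    (∀ x ∈ LambdaSet 𝒬 K, ∀ a : ℝ, 0 ≤ a → a • x ∈ LambdaSet 𝒬 K) ∧
    (0 : Fin d → ℝ) ∈ LambdaSet 𝒬 K ∧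
    ∀ A : Set (Fin d → ℝ), IsClosed A →
      (∃ N : Set Ω₁, QPolar 𝒬 N ∧ ∀ ω, ω ∉ N → A ⊆ K ω) →
      A ⊆ LambdaSet 𝒬 K := by
  refine ⟨?_, ?_, ?_, ?_, ?_⟩
  · refine IsSeqClosed.isClosed fun u x hu hx => mem_LambdaSet_of_countable hu fun ω hω => ?_
    exact (hKclosed ω).mem_of_tendsto hx (Filter.Eventually.of_forall hω)
  · intro x hx y hy a b ha hb hab
    refine mem_LambdaSet_of_countable (u := fun i : Bool => cond i x y)
      (Bool.forall_bool.2 ⟨hy, hx⟩) fun ω hω => ?_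
    exact hKconv ω (hω true) (hω false) ha hb hab
  · intro x hx a ha
    exact mem_LambdaSet_of_countable (u := fun _ : Unit => x) (fun _ => hx)
      fun ω hω => hKcone ω x (hω ()) a ha
  · refine (QPolar.empty 𝒬).mono fun ω hω => hω ?_
    obtain ⟨x, hx⟩ := hKne ω
    simpa using hKcone ω x hx 0 le_rfl
  · rintro A - ⟨N, hN, hA⟩ x hx
    refine hN.mono fun ω hω => ?_
    by_contra hc
    exact hω (hA ω hc hx)

end
end

section
/- The set of all tuples (ω, z, α, Q, R) ∈ Ω_t × ℝ^d × ℝ^d × 𝔓(Ω₁)^d × 𝔓(Ω₁) such that (a) for every i ≤ d, S^i_{t+1}(ω,·) is Q^i-integrable and α^i E^{Q^i}[S^i_{t+1}(ω,·)] = z^i; (b) P(ω) ≪ Q^1 ≪ R; (c) R ∈ 𝒫_t(ω); and (d) (Q,α) ∈ 𝒟_t(ω), is an analytic subset of the Polish space Ω_t × ℝ^d × ℝ^d × 𝔓(Ω₁)^d × 𝔓(Ω₁). -/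
/-!
Every condition except `R ∈ 𝒫_t(ω)` turns out to be Borel, so the set is the intersection of a Borel
set with the preimage of the analytic graph of `𝒫_t`, and everything would be immediate if the space
of probability measures on `Ω₁` were known to be Polish with its evaluation maps Borel.

In place of Polishness it suffices that this space is a continuous image `g(ℕ^ℕ)` of Baire space
(`exists_continuous_surjective_probabilityMeasure`). Embed `Ω₁` in the Hilbert cube `C`. By
Prokhorov's theorem the probability measures on `C` form a compact metrizable space; pushforward
embeds the probability measures on `Ω₁` in it (`isEmbedding_map_probabilityMeasure`), and the image
consists of the measures giving full mass to the Borel copy of `Ω₁`, which is a Borel, hence analytic,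
condition because evaluations are Borel for the weak topology (`measurable_toMeasure_comp`).

The set in the theorem is then pulled back along `g` (in all measure coordinates) to a genuinely
Polish space, where the measures become kernels. There absolute continuity, integrability, integrals
and Radon–Nikodym derivatives depend measurably on the parameter, by the measurable Radon–Nikodym
theorem for kernels; the membership in the interior of the dual cone is jointly measurable because
`int K(q)* = ⋃ {B : B ⊆ K(q)*}` over a countable basis of open sets `B`
(`measurableSet_mem_interior_dCone`). Analyticity is finally pushed forward along `g`.
-/

open Finset MeasureTheory
open scoped NNReal

noncomputable section

/-- The (nonnegative) dual cone of a set `K ⊆ ℝ^d`. -/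
def dCone {d : ℕ} (K : Set (Fin d → ℝ)) : Set (Fin d → ℝ) :=
  {y | ∀ x ∈ K, 0 ≤ ∑ i, x i * y i}

open Set Filter Topology ProbabilityTheory

/-! ### The weak topology on probability measures -/

/-- A weakly continuous family of probability measures is measurable for the Giry `σ`-algebra:
evaluation at an open set is lower semicontinuous by the portmanteau theorem. -/
lemma measurable_toMeasure_comp {X α : Type*} [TopologicalSpace X] [MeasurableSpace X]
    [OpensMeasurableSpace X] [TopologicalSpace α] [MeasurableSpace α] [BorelSpace α]
    [HasOuterApproxClosed α] {g : X → ProbabilityMeasure α} (hg : Continuous g) :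
    Measurable fun x => (g x : Measure α) := by
  refine Measurable.measure_of_isPiSystem_of_isProbabilityMeasure
    (BorelSpace.measurable_eq (α := α)) isPiSystem_isOpen fun U hU => ?_
  refine LowerSemicontinuous.measurable (lowerSemicontinuous_iff_le_liminf.2 fun x => ?_)
  exact ProbabilityMeasure.le_liminf_measure_open_of_tendsto (hg.tendsto x) hU

/-- Unlike Mathlib's version for closed embeddings, no condition on the range of `f` is needed: the
open sets of `α` are exactly the preimages of open sets of `β`, so the portmanteau theorem transfers
convergence. -/
lemma isEmbedding_map_probabilityMeasure {α β : Type*} [TopologicalSpace α] [PolishSpace α]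
    [MeasurableSpace α] [BorelSpace α] [TopologicalSpace β] [PolishSpace β]
    [MeasurableSpace β] [BorelSpace β] {f : α → β} (hf : IsEmbedding f) :
    IsEmbedding fun μ : ProbabilityMeasure α => μ.map hf.continuous.measurable.aemeasurable := by
  have hcont := ProbabilityMeasure.continuous_map hf.continuous
  have hm := hf.continuous.measurable
  refine ⟨isInducing_iff_nhds.2 fun μ => le_antisymm (hcont.tendsto μ).le_comap ?_,
    fun μ ν h => ?_⟩
  · have : (Filter.comap (fun μ : ProbabilityMeasure α => μ.map hm.aemeasurable)
      (𝓝 (μ.map hm.aemeasurable))).IsCountablyGenerated := inferInstance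
    change Tendsto id (Filter.comap (fun μ : ProbabilityMeasure α => μ.map hm.aemeasurable)
      (𝓝 (μ.map hm.aemeasurable))) (𝓝 μ)
    refine tendsto_of_forall_isOpen_le_liminf' (μs := id) fun G hG => ?_
    obtain ⟨V, hV, rfl⟩ := hf.isInducing.isOpen_iff.1 hG
    have := ProbabilityMeasure.le_liminf_measure_open_of_tendsto
      (tendsto_comap (f := fun μ : ProbabilityMeasure α => μ.map hm.aemeasurable)
        (x := 𝓝 (μ.map hm.aemeasurable))) hV
    simpa [ProbabilityMeasure.toMeasure_map, Measure.map_apply hm hV.measurableSet] using this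
  · have hemb : MeasurableEmbedding f := hf.continuous.measurableEmbedding hf.injective
    have h' : (μ : Measure α).map f = (ν : Measure α).map f := by
      simpa [ProbabilityMeasure.toMeasure_map] using congrArg (fun ρ : ProbabilityMeasure β => (ρ : Measure β)) h
    apply Subtype.ext
    have h2 := congrArg (Measure.comap f) h'
    rwa [hemb.comap_map, hemb.comap_map] at h2

/-- Probability measures on a Polish space are weakly continuously parametrized by Baire space. -/
lemma exists_continuous_surjective_probabilityMeasure (α : Type*) [TopologicalSpace α]
    [PolishSpace α] [MeasurableSpace α] [BorelSpace α] [Nonempty α] :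
    ∃ g : (ℕ → ℕ) → ProbabilityMeasure α, Continuous g ∧ Function.Surjective g := by
  let := TopologicalSpace.upgradeIsCompletelyMetrizable α
  obtain ⟨f, hf⟩ := Metric.PiNatEmbed.exists_embedding_to_hilbert_cube (X := α)
  have hm := hf.continuous.measurable
  have hemb : MeasurableEmbedding f := hf.continuous.measurableEmbedding hf.injective
  have hF := isEmbedding_map_probabilityMeasure hf
  set F := fun μ : ProbabilityMeasure α => μ.map hm.aemeasurable with hFdef
  let : MetricSpace (ProbabilityMeasure (ℕ → unitInterval)) :=
    TopologicalSpace.metrizableSpaceMetric _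
  have hpol : PolishSpace (ProbabilityMeasure (ℕ → unitInterval)) := inferInstance
  have hrange : range F = {ν : ProbabilityMeasure (ℕ → unitInterval) | (ν : Measure (ℕ → unitInterval)) (range f) = 1} := by
    ext ν
    constructor
    · rintro ⟨μ, rfl⟩
      simp [F, ProbabilityMeasure.toMeasure_map,
        Measure.map_apply hm hemb.measurableSet_range]
    · intro hν
      have hmap : ((ν : Measure (ℕ → unitInterval)).comap f).map f = ν := by
        rw [hemb.map_comap]
        exact Measure.restrict_eq_self_of_ae_mem
          ((prob_compl_eq_zero_iff hemb.measurableSet_range).2 hν)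
      have hp : IsProbabilityMeasure ((ν : Measure (ℕ → unitInterval)).comap f) :=
        ⟨by rw [hemb.comap_apply, image_univ]; exact hν⟩
      exact ⟨⟨_, hp⟩, Subtype.ext (by simpa [F, ProbabilityMeasure.toMeasure_map] using! hmap)⟩
  have han : AnalyticSet (range F) := by
    let : MeasurableSpace (ProbabilityMeasure (ℕ → unitInterval)) := borel _
    have : BorelSpace (ProbabilityMeasure (ℕ → unitInterval)) := ⟨rfl⟩
    have hmeas := measurable_toMeasure_comp
      (continuous_id (X := ProbabilityMeasure (ℕ → unitInterval)))
    rw [hrange]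
    exact ((Measure.measurable_coe hemb.measurableSet_range).comp hmeas
      (measurableSet_singleton 1)).analyticSet
  rw [AnalyticSet] at han
  rcases han with h | ⟨φ, hφ, hφr⟩
  · obtain ⟨a⟩ := ‹Nonempty α›
    exact absurd (h ▸ mem_range_self (f := F) ⟨Measure.dirac a, inferInstance⟩) (by simp)
  · have hmem : ∀ x, φ x ∈ range F := fun x => hφr ▸ mem_range_self x
    choose g hg using hmem
    refine ⟨g, hF.continuous_iff.2 ?_, fun μ => ?_⟩
    · rwa [show F ∘ g = φ from funext hg]
    · obtain ⟨x, hx⟩ : F μ ∈ range φ := hφr ▸ mem_range_self μ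
      exact ⟨x, hF.injective ((hg x).trans hx)⟩

/-! ### Measurability of the cone condition -/

/-- Measurability of the random set `K` (in the sense of hitting closed sets) makes membership in the
interior of its dual cone jointly measurable. -/
lemma measurableSet_mem_interior_dCone {Y : Type*} [MeasurableSpace Y] {d : ℕ}
    {K : Y → Set (Fin d → ℝ)}
    (hK : ∀ C : Set (Fin d → ℝ), IsClosed C → MeasurableSet {q | (K q ∩ C).Nonempty}) :
    MeasurableSet {p : Y × (Fin d → ℝ) | p.2 ∈ interior (dCone (K p.1))} := by
  -- An open set is a countable union of closed sets, so hitting sets of open sets are measurable.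
  have hKo : ∀ U : Set (Fin d → ℝ), IsOpen U → MeasurableSet {q | (K q ∩ U).Nonempty} := by
    intro U hU
    obtain ⟨F, hF, -, hFU, -⟩ := hU.exists_iUnion_isClosed
    have : {q | (K q ∩ U).Nonempty} = ⋃ n, {q | (K q ∩ F n).Nonempty} := by
      ext q
      simp [← hFU, inter_iUnion]
    rw [this]
    exact MeasurableSet.iUnion fun n => hK _ (hF n)
  let 𝓑 := TopologicalSpace.countableBasis (Fin d → ℝ)
  have hsub : ∀ B ∈ 𝓑, MeasurableSet {q | B ⊆ dCone (K q)} := by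
    intro B hB
    -- `B ⊆ K(q)*` fails iff `K(q)` hits the open set of `x` pairing negatively with a point of `B`.
    have hU : IsOpen (⋃ y ∈ B, {x : Fin d → ℝ | ∑ i, x i * y i < 0}) :=
      isOpen_biUnion fun y _ => isOpen_lt (by fun_prop) continuous_const
    convert (hKo _ hU).compl using 1
    ext q
    simp only [mem_compl_iff, mem_ofPred_eq, Set.Nonempty, mem_inter_iff, mem_iUnion, not_exists,
      dCone, Set.subset_def, not_and, not_lt, exists_prop]
    exact ⟨fun h x hx y hy => h y hy x hx, fun h y hy x hx => h x hx y hy⟩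
  have : {p : Y × (Fin d → ℝ) | p.2 ∈ interior (dCone (K p.1))}
      = ⋃ B ∈ 𝓑, {q | B ⊆ dCone (K q)} ×ˢ B := by
    ext ⟨q, y⟩
    simp only [mem_ofPred_eq, mem_iUnion, mem_prod, exists_prop]
    constructor
    · intro h
      obtain ⟨B, hB, hy, hBs⟩ := (TopologicalSpace.isBasis_countableBasis
        (Fin d → ℝ)).exists_subset_of_mem_open h isOpen_interior
      exact ⟨B, hB, hBs.trans interior_subset, hy⟩
    · rintro ⟨B, hB, hs, hy⟩
      exact interior_maximal hs (TopologicalSpace.isOpen_of_mem_countableBasis hB) hy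
  rw [this]
  exact MeasurableSet.biUnion (TopologicalSpace.countable_countableBasis _) fun B hB =>
    (hsub B hB).prod (TopologicalSpace.isOpen_of_mem_countableBasis hB).measurableSet

/-! ### The parametrized set -/

/-- Tuples `(ω, z, α, a, b)` in which the codes `a i` and `b` in Baire space stand for the
probability measures `Q i` and `R`. -/
abbrev ParamSpace (t d : ℕ) (Ω₁ : Type) : Type :=
  (Fin t → Ω₁) × (Fin d → ℝ) × (Fin d → ℝ) × (Fin d → ℕ → ℕ) × (ℕ → ℕ)

/-- the set of tuples `(ω, z, α, Q, R)` with
`α^i E^{Q^i}[S^i_{t+1}(ω,·)] = z^i`, `P(ω) ≪ Q^1 ≪ R`, `R ∈ 𝒫_t(ω)` and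
`(Q,α) ∈ 𝒟_t(ω)` is analytic. -/
theorem dSet_analytic (d t : ℕ) (hd : 0 < d)
    (Ω₁ : Type) [TopologicalSpace Ω₁] [PolishSpace Ω₁] [MeasurableSpace Ω₁]
    [BorelSpace Ω₁] [Nonempty Ω₁]
    (Pt : (Fin t → Ω₁) → Set (ProbabilityMeasure Ω₁))
    (hPtne : ∀ ω, (Pt ω).Nonempty)
    (hPtconv : ∀ ω, ConvexPM (Pt ω))
    (hPtgraph : AnalyticSet
      {p : (Fin t → Ω₁) × ProbabilityMeasure Ω₁ | p.2 ∈ Pt p.1})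
    (K : ((Fin t → Ω₁) × Ω₁) → Set (Fin d → ℝ))
    (hKmeas : ∀ C : Set (Fin d → ℝ), IsClosed C →
      MeasurableSet {q : (Fin t → Ω₁) × Ω₁ | (K q ∩ C).Nonempty})
    (hKclosed : ∀ q, IsClosed (K q))
    (hKconv : ∀ q, Convex ℝ (K q))
    (hKcone : ∀ q, ∀ x ∈ K q, ∀ a : ℝ, 0 ≤ a → a • x ∈ K q)
    (hKorth : ∀ q, {x : Fin d → ℝ | ∀ i, 0 ≤ x i} ⊆ K q)
    (S : ((Fin t → Ω₁) × Ω₁) → Fin d → ℝ) (hSmeas : Measurable S)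
    (hSint : ∀ q, S q ∈ interior (dCone (K q)))
    (hS1 : ∀ q, S q ⟨0, hd⟩ = 1)
    (Pker : (Fin t → Ω₁) → ProbabilityMeasure Ω₁)
    (hPker : Measurable fun ω => (Pker ω : Measure Ω₁)) :
    AnalyticSet
      {p : (Fin t → Ω₁) × (Fin d → ℝ) × (Fin d → ℝ) ×
            (Fin d → ProbabilityMeasure Ω₁) × ProbabilityMeasure Ω₁ |
        -- (a) integrability and `α^i E^{Q^i}[S^i(ω,·)] = z^i`
        (∀ i, Integrable (fun ω' => S (p.1, ω') i) (p.2.2.2.1 i : Measure Ω₁) ∧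
          p.2.2.1 i * ∫ ω', S (p.1, ω') i ∂(p.2.2.2.1 i : Measure Ω₁) = p.2.1 i) ∧
        -- (b) `P(ω) ≪ Q^1 ≪ R`
        ((Pker p.1 : Measure Ω₁) ≪ (p.2.2.2.1 ⟨0, hd⟩ : Measure Ω₁) ∧
          (p.2.2.2.1 ⟨0, hd⟩ : Measure Ω₁) ≪ (p.2.2.2.2 : Measure Ω₁)) ∧
        -- (c) `R ∈ 𝒫_t(ω)`
        p.2.2.2.2 ∈ Pt p.1 ∧
        -- (d) `(Q, α) ∈ 𝒟_t(ω)`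
        ((∀ i, (p.2.2.2.1 i : Measure Ω₁) ≪ (p.2.2.2.1 ⟨0, hd⟩ : Measure Ω₁)) ∧
          (∀ i, 0 < p.2.2.1 i) ∧
          (∀ᵐ ω' ∂(p.2.2.2.1 ⟨0, hd⟩ : Measure Ω₁),
            (fun i => p.2.2.1 i * S (p.1, ω') i *
                ((p.2.2.2.1 i : Measure Ω₁).rnDeriv
                  (p.2.2.2.1 ⟨0, hd⟩ : Measure Ω₁) ω').toReal)
              ∈ interior (dCone (K (p.1, ω')))))} := by
  obtain ⟨g, hg, hgs⟩ := exists_continuous_surjective_probabilityMeasure Ω₁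
  have hgm : Measurable fun a => (g a : Measure Ω₁) := measurable_toMeasure_comp hg
  let Φ : ParamSpace t d Ω₁ → (Fin t → Ω₁) × (Fin d → ℝ) × (Fin d → ℝ) ×
      (Fin d → ProbabilityMeasure Ω₁) × ProbabilityMeasure Ω₁ :=
    fun x => (x.1, x.2.1, x.2.2.1, fun i => g (x.2.2.2.1 i), g x.2.2.2.2)
  have hΦ : Continuous Φ := by fun_prop
  have hΦs : Function.Surjective Φ := by
    rintro ⟨ω, z, α, Q, R⟩
    choose a ha using fun i => hgs (Q i)
    obtain ⟨b, rfl⟩ := hgs R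
    exact ⟨(ω, z, α, a, b), by simp [Φ, ha]⟩
  have hpull : ∀ T, AnalyticSet (Φ ⁻¹' T) → AnalyticSet T := fun T h => by
    simpa only [Set.image_preimage_eq T hΦs] using h.image_of_continuous hΦ
  refine hpull _ ?_
  -- The measures `Q i`, `R` and `P(ω)` as kernels over the Polish parameter space.
  let κ : Fin d → Kernel (ParamSpace t d Ω₁) Ω₁ := fun i => ⟨fun x => g (x.2.2.2.1 i), hgm.comp (by fun_prop)⟩
  let ρ : Kernel (ParamSpace t d Ω₁) Ω₁ := ⟨fun x => g x.2.2.2.2, hgm.comp (by fun_prop)⟩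
  let π : Kernel (ParamSpace t d Ω₁) Ω₁ := ⟨fun x => Pker x.1, hPker.comp (by fun_prop)⟩
  have : ∀ i, IsMarkovKernel (κ i) := fun i => ⟨fun x => (g (x.2.2.2.1 i)).2⟩
  have : IsMarkovKernel ρ := ⟨fun x => (g x.2.2.2.2).2⟩
  have : IsMarkovKernel π := ⟨fun x => (Pker x.1).2⟩
  let i₀ : Fin d := ⟨0, hd⟩
  have hSi : ∀ i, StronglyMeasurable
      (Function.uncurry fun (x : ParamSpace t d Ω₁) (ω' : Ω₁) => S (x.1, ω') i) := fun i =>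
    Measurable.stronglyMeasurable (by
      have : Measurable fun p : ParamSpace t d Ω₁ × Ω₁ => S (p.1.1, p.2) := hSmeas.comp (by fun_prop)
      exact (measurable_pi_apply i).comp this)
  let A₁ : Set (ParamSpace t d Ω₁) := {x | ∀ i, Integrable (fun ω' => S (x.1, ω') i) (κ i x) ∧
    x.2.2.1 i * ∫ ω', S (x.1, ω') i ∂(κ i x) = x.2.1 i}
  have hA₁ : MeasurableSet A₁ := by
    refine measurableSet_setOfPred.2 (Measurable.forall fun i => measurableSet_setOfPred.1 ?_)
    refine (measurableSet_kernel_integrable (hSi i)).inter ?_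
    have h := (StronglyMeasurable.integral_kernel_prod_right (κ := κ i) (hSi i)).measurable
    exact measurableSet_eq_fun (Measurable.mul (by fun_prop) h) (by fun_prop)
  let A₂ : Set (ParamSpace t d Ω₁) := {x | π x ≪ κ i₀ x ∧ κ i₀ x ≪ ρ x}
  have hA₂ : MeasurableSet A₂ :=
    (Kernel.measurableSet_absolutelyContinuous π (κ i₀)).inter
      (Kernel.measurableSet_absolutelyContinuous (κ i₀) ρ)
  let A₃ : Set (ParamSpace t d Ω₁) := {x | (∀ i, κ i x ≪ κ i₀ x) ∧ ∀ i, 0 < x.2.2.1 i}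
  have hA₃ : MeasurableSet A₃ := by
    refine MeasurableSet.inter ?_ ?_
    · exact measurableSet_setOfPred.2 (Measurable.forall fun i =>
        measurableSet_setOfPred.1 (Kernel.measurableSet_absolutelyContinuous (κ i) (κ i₀)))
    · exact measurableSet_setOfPred.2 (Measurable.forall fun i =>
        measurableSet_setOfPred.1 (measurableSet_lt measurable_const (by fun_prop)))
  -- The kernel derivative is jointly measurable and agrees a.s. with the pointwise derivative.
  let v : ParamSpace t d Ω₁ × Ω₁ → Fin d → ℝ := fun p i =>
    p.1.2.2.1 i * S (p.1.1, p.2) i * (Kernel.rnDeriv (κ i) (κ i₀) p.1 p.2).toReal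
  have hv : Measurable v := measurable_pi_lambda _ fun i => by
    refine Measurable.mul (Measurable.mul (by fun_prop) (hSi i).measurable) ?_
    exact (Kernel.measurable_rnDeriv (κ i) (κ i₀)).ennreal_toReal
  let N : Set (ParamSpace t d Ω₁ × Ω₁) := {p | v p ∈ interior (dCone (K (p.1.1, p.2)))}
  have hN : MeasurableSet N := by
    have : Measurable fun p : ParamSpace t d Ω₁ × Ω₁ => ((p.1.1, p.2), v p) := by fun_prop
    exact this (measurableSet_mem_interior_dCone hKmeas)
  let A₄ : Set (ParamSpace t d Ω₁) := {x | κ i₀ x (Prod.mk x ⁻¹' Nᶜ) = 0}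
  have hA₄ : MeasurableSet A₄ :=
    Kernel.measurable_kernel_prodMk_left hN.compl (measurableSet_singleton 0)
  have hA₄' : ∀ x, x ∈ A₄ ↔ ∀ᵐ ω' ∂(κ i₀ x), (fun i => x.2.2.1 i * S (x.1, ω') i *
      ((κ i x).rnDeriv (κ i₀ x) ω').toReal) ∈ interior (dCone (K (x.1, ω'))) := by
    intro x
    have h1 : x ∈ A₄ ↔ ∀ᵐ ω' ∂(κ i₀ x), v (x, ω') ∈ interior (dCone (K (x.1, ω'))) := Iff.rfl
    rw [h1]
    have hae : ∀ᵐ ω' ∂(κ i₀ x), ∀ i,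
        Kernel.rnDeriv (κ i) (κ i₀) x ω' = (κ i x).rnDeriv (κ i₀ x) ω' :=
      ae_all_iff.2 fun i => Kernel.rnDeriv_eq_rnDeriv_measure
    refine eventually_congr (hae.mono fun ω' h => ?_)
    simp only [v, h]
  have : TopologicalSpace.IsCompletelyMetrizableSpace (ParamSpace t d Ω₁) := inferInstance
  have : PolishSpace (ParamSpace t d Ω₁) := inferInstance
  -- The Borel `σ`-algebra of the parameter space is the product `σ`-algebra, by second
  -- countability of the factors; instance search needs this one factor at a time.
  have hprod : ∀ (Y Z : Type) [TopologicalSpace Y] [TopologicalSpace Z] [MeasurableSpace Y]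
      [MeasurableSpace Z] [BorelSpace Y] [BorelSpace Z] [SecondCountableTopology Y]
      [SecondCountableTopology Z], BorelSpace (Y × Z) ∧ SecondCountableTopology (Y × Z) :=
    fun _ _ => ⟨inferInstance, inferInstance⟩
  obtain ⟨_, _⟩ := hprod (Fin d → ℕ → ℕ) (ℕ → ℕ)
  obtain ⟨_, _⟩ := hprod (Fin d → ℝ) ((Fin d → ℕ → ℕ) × (ℕ → ℕ))
  obtain ⟨_, _⟩ := hprod (Fin d → ℝ) ((Fin d → ℝ) × (Fin d → ℕ → ℕ) × (ℕ → ℕ))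
  have : BorelSpace (ParamSpace t d Ω₁) := (hprod (Fin t → Ω₁)
    ((Fin d → ℝ) × (Fin d → ℝ) × (Fin d → ℕ → ℕ) × (ℕ → ℕ))).1
  have hG : AnalyticSet {x : ParamSpace t d Ω₁ | g x.2.2.2.2 ∈ Pt x.1} :=
    hPtgraph.preimage (f := fun x : ParamSpace t d Ω₁ => (x.1, g x.2.2.2.2)) (by fun_prop)
  have hB : AnalyticSet (A₁ ∩ A₂ ∩ A₃ ∩ A₄) :=
    (((hA₁.inter hA₂).inter hA₃).inter hA₄).analyticSet
  have hfin : AnalyticSet ((A₁ ∩ A₂ ∩ A₃ ∩ A₄) ∩ {x : ParamSpace t d Ω₁ | g x.2.2.2.2 ∈ Pt x.1}) := by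
    rw [Set.inter_eq_iInter]
    exact AnalyticSet.iInter fun b => by cases b <;> assumption
  convert hfin using 1
  ext x
  constructor
  · rintro ⟨h1, h2, h3, h4, h5, h6⟩
    exact ⟨⟨⟨⟨h1, h2⟩, h4, h5⟩, (hA₄' x).2 h6⟩, h3⟩
  · rintro ⟨⟨⟨⟨h1, h2⟩, h4, h5⟩, h6⟩, h3⟩
    exact ⟨h1, h2, h3, h4, h5, (hA₄' x).1 h6⟩

end
end

section
/- Encoding of consistent price systems via vectors of measures: let K : Ω₁ → 2^{ℝ^d} and S be as in the context and let z ∈ ℝ^d. (Forward direction) If Q̃ ∈ 𝔓(Ω₁) and Y : Ω₁ → ℝ^d is bounded, Borel-measurable, with Y ∈ Int K*(·) Q̃-a.s. and E^{Q̃}[Y] = z componentwise, then setting G^i := Y^i/S^i, the numbers α^i := E^{Q̃}[G^i] are finite and strictly positive, the measures Q^i defined by dQ^i/dQ̃ := G^i/α^i are probability measures with Q = (Q^i)_{i≤d} ∈ ℳ_a and α = (α^i)_{i≤d} ∈ (0,∞)^d, and one has α S D(Q) ∈ Int K*(·) Q^1-a.s. and α^i E^{Q^i}[S^i] = z^i for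 all i. (Converse direction) If Q ∈ ℳ_a, α ∈ (0,∞)^d satisfy α S D(Q) ∈ Int K*(·) Q^1-a.s. and α^i E^{Q^i}[S^i] = z^i for all i, then Q̃ := Q^1 and Y := α S D(Q) satisfy Y ∈ Int K*(·) Q̃-a.s. and E^{Q̃}[Y] = z. -/
/-!
The cone `K` contains the orthant, so every vector in the interior of the dual cone has strictly
positive coordinates (`pos_of_mem_interior_dCone`). The ratio bound then gives
`Y^i / S^i ≤ c * (Y^1 / S^1) = c * Y^1`, since `S^1 = 1`; hence `G^i = Y^i / S^i` is bounded as soon as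
`Y` is, which makes `α^i` finite and positive even though `S` need not be bounded away from zero.

Write `g^i = G^i / α^i` for the density of `Q^i` with respect to `Q̃`. As `g^1 > 0` a.s., the chain rule
for densities (`rnDeriv_withDensity_ofReal`) gives `dQ^i / dQ^1 = g^i / g^1`, so that
`α S D(Q) = (α^1 / Y^1) Y` is a positive multiple of `Y` and stays in the interior of the dual cone
(`smul_mem_interior_dCone`). The moment conditions, in both directions, are changes of measure.
-/

open Finset MeasureTheory

noncomputable section

/-- `α^i := E^{Q̃}[Y^i / S^i]`. -/
def alphaOf {d : ℕ} {Ω₁ : Type} [MeasurableSpace Ω₁]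
    (Qt : Measure Ω₁) (S Y : Ω₁ → Fin d → ℝ) (i : Fin d) : ℝ :=
  ∫ ω, Y ω i / S ω i ∂Qt

/-- `Q^i` defined by `dQ^i/dQ̃ := (Y^i/S^i)/α^i`. -/
def QOf {d : ℕ} {Ω₁ : Type} [MeasurableSpace Ω₁]
    (Qt : Measure Ω₁) (S Y : Ω₁ → Fin d → ℝ) (i : Fin d) : Measure Ω₁ :=
  Qt.withDensity (fun ω => ENNReal.ofReal (Y ω i / S ω i / alphaOf Qt S Y i))

/-- `D(Q) = (dQ^i/dQ^1)_i`, the Radon–Nikodym derivatives of the absolutely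
continuous parts, as real numbers. -/
def DOf {Ω₁ : Type} [MeasurableSpace Ω₁] {d : ℕ}
    (Q : Fin d → Measure Ω₁) (i0 : Fin d) (i : Fin d) (ω : Ω₁) : ℝ :=
  ((Q i).rnDeriv (Q i0) ω).toReal

lemma pos_of_mem_interior_dCone {d : ℕ} {K : Set (Fin d → ℝ)}
    (hK : {x : Fin d → ℝ | ∀ i, 0 ≤ x i} ⊆ K) {y : Fin d → ℝ}
    (hy : y ∈ interior (dCone K)) (i : Fin d) : 0 < y i := by
  have hsub : dCone K ⊆ (fun x : Fin d → ℝ => x i) ⁻¹' Set.Ici 0 := by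
    intro x hx
    -- test against the `i`-th unit vector
    have := hx (Pi.single i 1) (hK fun j => by
      by_cases h : j = i
      · subst h; simp
      · simp [h])
    simpa [Pi.single_apply] using this
  have h := interior_mono hsub hy
  rw [← (isOpenMap_eval i).preimage_interior_eq_interior_preimage (continuous_apply i),
    interior_Ici] at h
  exact h

lemma smul_mem_interior_dCone {d : ℕ} {K : Set (Fin d → ℝ)} {y : Fin d → ℝ}
    (hy : y ∈ interior (dCone K)) {a : ℝ} (ha : 0 < a) :
    a • y ∈ interior (dCone K) := by
  have hsub : (fun x : Fin d → ℝ => a • x) '' dCone K ⊆ dCone K := by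
    rintro _ ⟨x, hx, rfl⟩ w hw
    have : ∑ i, w i * (a • x) i = a * ∑ i, w i * x i := by
      rw [Finset.mul_sum]
      exact Finset.sum_congr rfl fun i _ => by simp only [Pi.smul_apply, smul_eq_mul]; ring
    rw [this]
    exact mul_nonneg ha.le (hx w hw)
  exact interior_mono hsub
    ((isOpenMap_smul₀ ha.ne').image_interior_subset _ (Set.mem_image_of_mem _ hy))

/-- Chain rule for two measures given by real densities with respect to a common measure. -/
lemma rnDeriv_withDensity_ofReal {Ω : Type} [MeasurableSpace Ω] {μ : Measure Ω}
    {f g : Ω → ℝ} (hf : Measurable f) (hg : Measurable g) (hgpos : ∀ᵐ ω ∂μ, 0 < g ω)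
    [SigmaFinite (μ.withDensity fun ω => ENNReal.ofReal (g ω))] :
    μ.withDensity (fun ω => ENNReal.ofReal (f ω)) ≪
        μ.withDensity (fun ω => ENNReal.ofReal (g ω)) ∧
      (μ.withDensity fun ω => ENNReal.ofReal (f ω)).rnDeriv
          (μ.withDensity fun ω => ENNReal.ofReal (g ω))
        =ᵐ[μ.withDensity fun ω => ENNReal.ofReal (g ω)]
          fun ω => ENNReal.ofReal (f ω / g ω) := by
  have hm : Measurable fun ω => ENNReal.ofReal (f ω / g ω) := (hf.div hg).ennreal_ofReal
  have heq : μ.withDensity (fun ω => ENNReal.ofReal (f ω)) =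
      (μ.withDensity fun ω => ENNReal.ofReal (g ω)).withDensity
        fun ω => ENNReal.ofReal (f ω / g ω) := by
    rw [← withDensity_mul μ hg.ennreal_ofReal hm]
    refine withDensity_congr_ae ?_
    filter_upwards [hgpos] with ω h
    rw [Pi.mul_apply, ← ENNReal.ofReal_mul h.le, mul_div_cancel₀ _ h.ne']
  rw [heq]
  exact ⟨withDensity_absolutelyContinuous _ _, Measure.rnDeriv_withDensity _ hm⟩

/-- encoding of consistent price systems via vectors of measures:
the correspondence `(Y,Q̃) ↔ (Q,α)` of the paper's Remark on coding, in both
directions. -/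
theorem coding_consistent_price_systems (d : ℕ) (hd : 0 < d)
    (Ω₁ : Type) [TopologicalSpace Ω₁] [PolishSpace Ω₁] [MeasurableSpace Ω₁]
    [BorelSpace Ω₁] [Nonempty Ω₁]
    (K : Ω₁ → Set (Fin d → ℝ))
    (hKmeas : ∀ C : Set (Fin d → ℝ), IsClosed C →
      MeasurableSet {ω | (K ω ∩ C).Nonempty})
    (hKclosed : ∀ ω, IsClosed (K ω))
    (hKconv : ∀ ω, Convex ℝ (K ω))
    (hKcone : ∀ ω, ∀ x ∈ K ω, ∀ a : ℝ, 0 ≤ a → a • x ∈ K ω)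
    (hKorth : ∀ ω, {x : Fin d → ℝ | ∀ i, 0 ≤ x i} ⊆ K ω)
    (hKbdry : ∀ ω, dCone (K ω) ∩ frontier {x : Fin d → ℝ | ∀ i, 0 ≤ x i} = {0})
    (c : ℝ) (hc : 0 < c)
    (hratio : ∀ ω, ∀ x ∈ dCone (K ω), x ≠ 0 → ∀ y ∈ dCone (K ω), y ≠ 0 →
      ∀ i j, x j / y j ≤ c * (x i / y i))
    (S : Ω₁ → Fin d → ℝ) (hSmeas : Measurable S)
    (hSint : ∀ ω, S ω ∈ interior (dCone (K ω)))
    (hS1 : ∀ ω, S ω ⟨0, hd⟩ = 1)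
    (z : Fin d → ℝ) :
    -- Forward direction
    (∀ Qt : Measure Ω₁, IsProbabilityMeasure Qt →
      ∀ Y : Ω₁ → Fin d → ℝ, Measurable Y → (∃ M : ℝ, ∀ ω i, |Y ω i| ≤ M) →
      (∀ᵐ ω ∂Qt, Y ω ∈ interior (dCone (K ω))) →
      (∀ i, ∫ ω, Y ω i ∂Qt = z i) →
      (∀ i, Integrable (fun ω => Y ω i / S ω i) Qt) ∧
      (∀ i, 0 < alphaOf Qt S Y i) ∧
      (∀ i, IsProbabilityMeasure (QOf Qt S Y i)) ∧
      (∀ i, QOf Qt S Y i ≪ QOf Qt S Y ⟨0, hd⟩) ∧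
      (∀ᵐ ω ∂(QOf Qt S Y ⟨0, hd⟩),
        (fun i => alphaOf Qt S Y i * S ω i * DOf (QOf Qt S Y) ⟨0, hd⟩ i ω)
          ∈ interior (dCone (K ω))) ∧
      (∀ i, Integrable (fun ω => S ω i) (QOf Qt S Y i) ∧
        alphaOf Qt S Y i * ∫ ω, S ω i ∂(QOf Qt S Y i) = z i)) ∧
    -- Converse direction
    (∀ Q : Fin d → Measure Ω₁, (∀ i, IsProbabilityMeasure (Q i)) →
      (∀ i, Q i ≪ Q ⟨0, hd⟩) →
      ∀ α : Fin d → ℝ, (∀ i, 0 < α i) →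
      (∀ᵐ ω ∂(Q ⟨0, hd⟩),
        (fun i => α i * S ω i * DOf Q ⟨0, hd⟩ i ω) ∈ interior (dCone (K ω))) →
      (∀ i, Integrable (fun ω => S ω i) (Q i) ∧
        α i * ∫ ω, S ω i ∂(Q i) = z i) →
      (∀ᵐ ω ∂(Q ⟨0, hd⟩),
        (fun i => α i * S ω i * DOf Q ⟨0, hd⟩ i ω) ∈ interior (dCone (K ω))) ∧
      (∀ i, Integrable (fun ω => α i * S ω i * DOf Q ⟨0, hd⟩ i ω) (Q ⟨0, hd⟩)) ∧
      (∀ i, ∫ ω, α i * S ω i * DOf Q ⟨0, hd⟩ i ω ∂(Q ⟨0, hd⟩) = z i)) := by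
  have hSpos : ∀ ω i, 0 < S ω i := fun ω => pos_of_mem_interior_dCone (hKorth ω) (hSint ω)
  have hSi : ∀ i, Measurable fun ω => S ω i := fun i => (measurable_pi_apply i).comp hSmeas
  set i0 : Fin d := ⟨0, hd⟩ with hi0
  refine ⟨?_, ?_⟩
  · rintro Qt hQt Y hY ⟨M, hM⟩ hYint hz
    have hYi : ∀ i, Measurable fun ω => Y ω i := fun i => (measurable_pi_apply i).comp hY
    have hYpos : ∀ᵐ ω ∂Qt, ∀ i, 0 < Y ω i := by
      filter_upwards [hYint] with ω h using pos_of_mem_interior_dCone (hKorth ω) h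
    have hGm : ∀ i, Measurable fun ω => Y ω i / S ω i := fun i => (hYi i).div (hSi i)
    have hGpos : ∀ i, ∀ᵐ ω ∂Qt, 0 < Y ω i / S ω i := fun i => by
      filter_upwards [hYpos] with ω h using div_pos (h i) (hSpos ω i)
    have hGint : ∀ i, Integrable (fun ω => Y ω i / S ω i) Qt := by
      intro i
      refine Integrable.of_bound (hGm i).aestronglyMeasurable (c * M) ?_
      filter_upwards [hYint, hYpos] with ω h1 h2
      have hY0 : Y ω ≠ 0 := fun h => (h2 i0).ne' (by rw [h]; rfl)
      have hS0 : S ω ≠ 0 := fun h => (hSpos ω i0).ne' (by rw [h]; rfl)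
      have h := hratio ω (Y ω) (interior_subset h1) hY0 (S ω) (interior_subset (hSint ω)) hS0 i0 i
      rw [hS1 ω, div_one] at h
      rw [Real.norm_eq_abs, abs_of_pos (div_pos (h2 i) (hSpos ω i))]
      exact h.trans (mul_le_mul_of_nonneg_left ((le_abs_self _).trans (hM ω i0)) hc.le)
    have hα : ∀ i, 0 < alphaOf Qt S Y i := by
      intro i
      refine (integral_pos_iff_support_of_nonneg_ae
        ((hGpos i).mono fun ω h => h.le) (hGint i)).2 ?_
      have : Function.support (fun ω => Y ω i / S ω i) =ᵐ[Qt] Set.univ := by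
        refine Filter.eventuallyEq_univ.2 ?_
        filter_upwards [hGpos i] with ω h using h.ne'
      rw [measure_congr this]
      simp
    have hgm : ∀ i, Measurable fun ω => Y ω i / S ω i / alphaOf Qt S Y i :=
      fun i => (hGm i).div_const _
    have hgpos : ∀ i, ∀ᵐ ω ∂Qt, 0 < Y ω i / S ω i / alphaOf Qt S Y i := fun i => by
      filter_upwards [hGpos i] with ω h using div_pos h (hα i)
    have hprob : ∀ i, IsProbabilityMeasure (QOf Qt S Y i) := by
      intro i
      refine ⟨?_⟩
      rw [QOf, withDensity_apply _ MeasurableSet.univ, Measure.restrict_univ,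
        ← ofReal_integral_eq_lintegral_ofReal ((hGint i).div_const _)
          ((hgpos i).mono fun ω h => h.le), integral_div]
      change ENNReal.ofReal (alphaOf Qt S Y i / alphaOf Qt S Y i) = 1
      rw [div_self (hα i).ne', ENNReal.ofReal_one]
    have hchain : ∀ i, QOf Qt S Y i ≪ QOf Qt S Y i0 ∧
        (QOf Qt S Y i).rnDeriv (QOf Qt S Y i0) =ᵐ[QOf Qt S Y i0] fun ω => ENNReal.ofReal
          (Y ω i / S ω i / alphaOf Qt S Y i / (Y ω i0 / S ω i0 / alphaOf Qt S Y i0)) := by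
      intro i
      have := hprob i0
      unfold QOf at this ⊢
      exact rnDeriv_withDensity_ofReal (hgm i) (hgm i0) (hgpos i0)
    refine ⟨hGint, hα, hprob, fun i => (hchain i).1, ?_, ?_⟩
    · have hac : QOf Qt S Y i0 ≪ Qt := withDensity_absolutelyContinuous _ _
      have hD := ae_all_iff.2 fun i => (hchain i).2
      filter_upwards [hD, hac.ae_le hYint, hac.ae_le hYpos] with ω hDω h1 h2
      have : (fun i => alphaOf Qt S Y i * S ω i * DOf (QOf Qt S Y) i0 i ω)
          = (alphaOf Qt S Y i0 / Y ω i0) • Y ω := by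
        funext i
        have hnn : 0 ≤ Y ω i / S ω i / alphaOf Qt S Y i /
            (Y ω i0 / S ω i0 / alphaOf Qt S Y i0) :=
          div_nonneg (div_pos (div_pos (h2 i) (hSpos ω i)) (hα i)).le
            (div_pos (div_pos (h2 i0) (hSpos ω i0)) (hα i0)).le
        rw [DOf, hDω i, ENNReal.toReal_ofReal hnn, hS1 ω, Pi.smul_apply, smul_eq_mul]
        have a1 := (hα i).ne'
        have a2 := (hα i0).ne'
        have a3 := (h2 i0).ne'
        have a4 := (hSpos ω i).ne'
        field_simp
      rw [this]
      exact smul_mem_interior_dCone h1 (div_pos (hα i0) (h2 i0))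
    · intro i
      -- `S^i` times the density of `Q^i` is `Y^i / α^i`
      have hae : (fun ω => (ENNReal.ofReal (Y ω i / S ω i / alphaOf Qt S Y i)).toReal • S ω i)
          =ᵐ[Qt] fun ω => Y ω i / alphaOf Qt S Y i := by
        filter_upwards [hgpos i] with ω h
        rw [ENNReal.toReal_ofReal h.le, smul_eq_mul]
        have a1 := (hα i).ne'
        have a4 := (hSpos ω i).ne'
        field_simp
      have hYint' : Integrable (fun ω => Y ω i) Qt :=
        Integrable.of_bound (hYi i).aestronglyMeasurable M (ae_of_all _ fun ω => hM ω i)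
      have hlt : ∀ᵐ ω ∂Qt, ENNReal.ofReal (Y ω i / S ω i / alphaOf Qt S Y i) < ⊤ :=
        ae_of_all _ fun _ => ENNReal.ofReal_lt_top
      constructor
      · rw [QOf, integrable_withDensity_iff_integrable_smul' (hgm i).ennreal_ofReal hlt]
        exact (hYint'.div_const _).congr hae.symm
      · rw [QOf, integral_withDensity_eq_integral_toReal_smul (hgm i).ennreal_ofReal hlt,
          integral_congr_ae hae, integral_div, hz i, mul_div_cancel₀ _ (hα i).ne']
  · intro Q hQ hac α hα hint hmom
    have hform : ∀ i, (fun ω => α i * S ω i * DOf Q i0 i ω) =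
        fun ω => α i * (((Q i).rnDeriv (Q i0) ω).toReal • S ω i) := by
      intro i
      funext ω
      rw [DOf, smul_eq_mul]
      ring
    refine ⟨hint, fun i => ?_, fun i => ?_⟩
    · rw [hform i]
      exact ((integrable_rnDeriv_smul_iff (hac i)).2 (hmom i).1).const_mul _
    · rw [hform i, integral_const_mul, integral_rnDeriv_smul (hac i)]
      exact (hmom i).2

end
end

section
/- In the exchange-rate (physical-units) market model, the dual cone of the solvency cone K is K* = {y ∈ ℝ^d₊ : y^j ≤ y^i π^{ij} for all i ≠ j}, where K* := {y ∈ ℝ^d : ⟨x,y⟩ ≥ 0 for all x ∈ K}. -/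
/-! The solvency cone is generated by the unit vectors `eᵢ` (throwing away a positive amount of
asset `i`) and the elementary positions `πⁱʲ eᵢ - eⱼ`, which one exchange of `i` into `j` settles.
Testing `y` against these generators gives the inequalities `0 ≤ yⁱ` and `yʲ ≤ yⁱ πⁱʲ`. Conversely,
if `y ≥ 0` and `x` is solvent through the transfers `a`, then `⟨x, y⟩` is at least minus the
`y`-value of the transfers, and by `sum_transfer_mul` that value is
`-∑_{i ≠ j} aⁱʲ (yⁱ πⁱʲ - yʲ) ≤ 0`. -/

open Finset

noncomputable section

/-- The solvency cone of the exchange-rate (physical-units) market model: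
positions that can be turned into nonnegative ones by exchanges at rates `π`. -/
def solvencyCone (d : ℕ) (π : Fin d → Fin d → ℝ) : Set (Fin d → ℝ) :=
  {x | ∃ a : Fin d → Fin d → ℝ, (∀ i j, 0 ≤ a i j) ∧
    ∀ i, 0 ≤ x i + ∑ j ∈ Finset.univ.erase i, (a j i - a i j * π i j)}

/-- Valued at prices `y`, the transfers `a` lose `aⁱʲ (yⁱ πⁱʲ - yʲ)` on each exchange of `i`
into `j`. -/
lemma sum_transfer_mul {d : ℕ} (π a : Fin d → Fin d → ℝ) (y : Fin d → ℝ) :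
    ∑ i, (∑ j ∈ univ.erase i, (a j i - a i j * π i j)) * y i =
      -∑ i, ∑ j ∈ univ.erase i, a i j * (y i * π i j - y j) := by
  have hswap : ∑ i, ∑ j ∈ univ.erase i, a j i * y i = ∑ i, ∑ j ∈ univ.erase i, a i j * y j :=
    Finset.sum_comm' (by simp [eq_comm])
  have h₁ : ∑ i, (∑ j ∈ univ.erase i, (a j i - a i j * π i j)) * y i =
      ∑ i, ∑ j ∈ univ.erase i, a j i * y i - ∑ i, ∑ j ∈ univ.erase i, a i j * (y i * π i j) := by
    simp only [← Finset.sum_sub_distrib, Finset.sum_mul]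
    exact Finset.sum_congr rfl fun i _ => Finset.sum_congr rfl fun j _ => by ring
  rw [h₁, hswap]
  simp only [mul_sub, Finset.sum_sub_distrib]
  ring

lemma single_mem_solvencyCone {d : ℕ} (π : Fin d → Fin d → ℝ) (i : Fin d) :
    Pi.single i 1 ∈ solvencyCone d π := by
  refine ⟨0, fun _ _ => le_rfl, fun k => ?_⟩
  have h : (0 : Fin d → ℝ) ≤ Pi.single i 1 := Pi.single_nonneg.2 zero_le_one
  simpa using h k

lemma exchange_mem_solvencyCone {d : ℕ} (π : Fin d → Fin d → ℝ) {i j : Fin d} (hij : i ≠ j) :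
    Pi.single i (π i j) - Pi.single j 1 ∈ solvencyCone d π := by
  refine ⟨fun k l => if k = i ∧ l = j then 1 else 0, fun k l => by positivity, fun k => ?_⟩
  rw [Finset.sum_sub_distrib]
  by_cases hi : k = i
  · subst hi
    simp [hij, hij.symm]
  · by_cases hj : k = j
    · subst hj
      simp [hij, hij.symm]
    · simp [hi, hj]

/-- the dual cone of the solvency cone is
`K* = {y ∈ ℝ^d₊ : y^j ≤ y^i π^{ij} for all i ≠ j}`. -/
theorem dualCone_solvencyCone (d : ℕ) (hd : 1 ≤ d)
    (π : Fin d → Fin d → ℝ) (hπ : ∀ i j, i ≠ j → 0 < π i j) :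
    dCone (solvencyCone d π) =
      {y : Fin d → ℝ | (∀ i, 0 ≤ y i) ∧ ∀ i j, i ≠ j → y j ≤ y i * π i j} := by
  ext y
  constructor
  · intro hy
    refine ⟨fun i => ?_, fun i j hij => ?_⟩
    · simpa [Pi.single_apply] using hy _ (single_mem_solvencyCone π i)
    · have h := hy _ (exchange_mem_solvencyCone π hij)
      simp only [Pi.sub_apply, sub_mul, Finset.sum_sub_distrib, Pi.single_apply, ite_mul, zero_mul,
        Finset.sum_ite_eq', Finset.mem_univ, if_true] at h
      linarith
  · rintro ⟨hy0, hy⟩ x ⟨a, ha, hx⟩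
    have h₁ : 0 ≤ ∑ i, (x i + ∑ j ∈ univ.erase i, (a j i - a i j * π i j)) * y i :=
      Finset.sum_nonneg fun i _ => mul_nonneg (hx i) (hy0 i)
    have h₂ : 0 ≤ ∑ i, ∑ j ∈ univ.erase i, a i j * (y i * π i j - y j) :=
      Finset.sum_nonneg fun i _ => Finset.sum_nonneg fun j hj =>
        mul_nonneg (ha i j) (sub_nonneg.2 (hy i j (Finset.ne_of_mem_erase hj).symm))
    simp only [add_mul, Finset.sum_add_distrib, sum_transfer_mul] at h₁
    linarith

end
end

section
/- Efficient friction is equivalent to strictly positive round-trip costs: under the triangle inequality π^{ij} ≤ π^{ik} π^{kj} for all pairwise distinct i,j,k, the interior of the cone K* = {y ∈ ℝ^d₊ : y^j ≤ y^i π^{ij} for all i ≠ j} is nonempty — equivalently, there exists y ∈ ℝ^d with y^i > 0 for all i and y^j < π^{ij} y^i for all i ≠ j — if and only if π^{ij} π^{ji} > 1 for all i ≠ j. -/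
/-!
The two characterisations of efficient friction agree because the strict inequalities describe the
interior of `K*` exactly (`mem_interior_KstarPi_iff`): inside the interior a single coordinate can
be moved up or down a little, which makes each inequality strict.

Strict inequalities along the round trip `j → i → j` give `y j < π i j * π j i * y j`, hence
`1 < π i j * π j i`. Conversely, put `P i i = 1` and `P i j = π i j` off the diagonal. The column
sums `y j = ∑ k, P k j` work: the triangle inequality says `P k j ≤ P k i * P i j` for all `k`,
and for `k = j` this is the strict inequality `1 < π j i * π i j`. Summing over `k` gives
`y j < y i * π i j`.
-/

open Finset

noncomputable section

/-- The dual cone of the solvency cone in the exchange-rate model: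
`K* = {y ∈ ℝ^d₊ : y^j ≤ y^i π^{ij} for all i ≠ j}`. -/
def KstarPi (d : ℕ) (π : Fin d → Fin d → ℝ) : Set (Fin d → ℝ) :=
  {y | (∀ i, 0 ≤ y i) ∧ ∀ i j, i ≠ j → y j ≤ y i * π i j}

/-- The interior of `K*` is the set cut out by the corresponding strict inequalities. -/
theorem mem_interior_KstarPi_iff {d : ℕ} {π : Fin d → Fin d → ℝ} {y : Fin d → ℝ} :
    y ∈ interior (KstarPi d π) ↔ (∀ i, 0 < y i) ∧ ∀ i j, i ≠ j → y j < π i j * y i := by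
  constructor
  · intro hy
    -- every coordinate can be perturbed alone, in both directions, without leaving `K*`
    have hmove : ∀ j, ∃ ε > 0, ∀ t, |t - y j| < ε → Function.update y j t ∈ KstarPi d π := by
      intro j
      have hc : Continuous fun t : ℝ => Function.update y j t :=
        continuous_const.update j continuous_id
      have hm : KstarPi d π ∈ nhds (Function.update y j (y j)) := by
        rw [Function.update_eq_self]
        exact mem_interior_iff_mem_nhds.1 hy
      obtain ⟨ε, hε, h⟩ := Metric.mem_nhds_iff.1 (hc.continuousAt.preimage_mem_nhds hm)
      exact ⟨ε, hε, fun t ht => h (by simpa [Real.dist_eq] using ht)⟩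
    constructor
    · intro i
      obtain ⟨ε, hε, h⟩ := hmove i
      have h0 := (h (y i - ε / 2) (by rw [abs_lt]; constructor <;> linarith)).1 i
      rw [Function.update_self] at h0
      linarith
    · intro i j hij
      obtain ⟨ε, hε, h⟩ := hmove j
      have h0 := (h (y j + ε / 2) (by rw [abs_lt]; constructor <;> linarith)).2 i j hij
      rw [Function.update_self, Function.update_of_ne hij] at h0
      linarith [mul_comm (y i) (π i j)]
  · intro hy
    refine mem_interior.2
      ⟨{z | (∀ i, 0 < z i) ∧ ∀ i j, i ≠ j → z j < π i j * z i}, ?_, ?_, hy⟩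
    · rintro z ⟨hz, hz'⟩
      exact ⟨fun i => (hz i).le, fun i j hij => by
        rw [mul_comm]; exact (hz' i j hij).le⟩
    · simp only [Set.ofPred_and, Set.ofPred_forall]
      refine (isOpen_iInter_of_finite fun i => isOpen_lt (by fun_prop) (by fun_prop)).inter ?_
      exact isOpen_iInter_of_finite fun i => isOpen_iInter_of_finite fun j =>
        isOpen_iInter_of_finite fun _ => isOpen_lt (by fun_prop) (by fun_prop)

/-- The column sums of `π`, with its diagonal replaced by ones, satisfy the strict inequalities
as soon as all round trips are strictly costly. -/
theorem exists_strict_of_roundTrip {d : ℕ} {π : Fin d → Fin d → ℝ}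
    (hπ : ∀ i j, i ≠ j → 0 < π i j)
    (htri : ∀ i j k, i ≠ j → j ≠ k → i ≠ k → π i j ≤ π i k * π k j)
    (h : ∀ i j, i ≠ j → 1 < π i j * π j i) :
    ∃ y : Fin d → ℝ, (∀ i, 0 < y i) ∧ ∀ i j, i ≠ j → y j < π i j * y i := by
  refine ⟨fun j => ∑ k, if k = j then 1 else π k j, fun i => ?_, fun i j hij => ?_⟩
  · refine sum_pos (fun k _ => ?_) ⟨i, mem_univ i⟩
    split_ifs with hk
    · exact one_pos
    · exact hπ k i hk
  · rw [mul_sum]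
    refine sum_lt_sum (fun k _ => ?_) ⟨j, mem_univ j, ?_⟩
    · by_cases hkj : k = j
      · subst hkj
        simpa [hij.symm] using (h i k hij).le
      · by_cases hki : k = i
        · subst hki
          simp [hij]
        · simpa [hkj, hki, mul_comm] using htri k j i hkj hij.symm hki
    · simpa [hij.symm] using h i j hij

/-- Composing the strict inequalities for `(i, j)` and `(j, i)` gives a strictly costly round
trip. -/
theorem roundTrip_of_strict {d : ℕ} {π : Fin d → Fin d → ℝ}
    (hπ : ∀ i j, i ≠ j → 0 < π i j) {y : Fin d → ℝ} (hy : ∀ i, 0 < y i)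
    (h : ∀ i j, i ≠ j → y j < π i j * y i) {i j : Fin d} (hij : i ≠ j) :
    1 < π i j * π j i := by
  have h2 := mul_lt_mul_of_pos_left (h j i hij.symm) (hπ i j hij)
  refine lt_of_mul_lt_mul_right (a := y j) ?_ (hy j).le
  linarith [h i j hij]

/-- under the triangle inequality, efficient friction
(`Int K* ≠ ∅`, equivalently the existence of `y` with strictly positive
components and `y^j < π^{ij} y^i` for `i ≠ j`) is equivalent to strictly
positive round-trip costs `π^{ij} π^{ji} > 1` for all `i ≠ j`. -/
theorem interior_Kstar_nonempty_iff (d : ℕ) (hd : 1 ≤ d)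
    (π : Fin d → Fin d → ℝ) (hπ : ∀ i j, i ≠ j → 0 < π i j)
    (htri : ∀ i j k, i ≠ j → j ≠ k → i ≠ k → π i j ≤ π i k * π k j) :
    ((interior (KstarPi d π)).Nonempty ↔ ∀ i j, i ≠ j → 1 < π i j * π j i) ∧
    ((∃ y : Fin d → ℝ, (∀ i, 0 < y i) ∧ ∀ i j, i ≠ j → y j < π i j * y i) ↔
      ∀ i j, i ≠ j → 1 < π i j * π j i) := by
  have hstrict : (∃ y : Fin d → ℝ, (∀ i, 0 < y i) ∧ ∀ i j, i ≠ j → y j < π i j * y i) ↔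
      ∀ i j, i ≠ j → 1 < π i j * π j i :=
    ⟨fun ⟨_, hy, h⟩ _ _ hij => roundTrip_of_strict hπ hy h hij,
      exists_strict_of_roundTrip hπ htri⟩
  refine ⟨?_, hstrict⟩
  rw [← hstrict]
  exact exists_congr fun _ => mem_interior_KstarPi_iff

end
end

section
/- Measurability of the graph of the interior of the dual cone: if Ψ : Ω → 2^{ℝ^d} is a random set whose values are nonempty closed convex cones and which admits a Castaing representation, i.e. there are 𝒜-measurable functions ψ_n : Ω → ℝ^d (n ≥ 1) with Ψ(ω) equal to the closure of {ψ_n(ω) : n ≥ 1} for every ω, then the graph {(ω,y) ∈ Ω × ℝ^d : y ∈ Int Ψ*(ω)} of the interior of the dual cone belongs to the product σ-field 𝒜 ⊗ ℬ(ℝ^d). -/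
/-! For any set `K`, a vector `y` is interior to the dual cone of `K` iff `⟨x, y⟩ ≥ ε ‖x‖₁` for all
`x ∈ K` and some `ε > 0`, which may be taken of the form `1 / (k + 1)`
(`mem_interior_dCone_iff`). The dual cone does not change when `K` is replaced by its closure
(`dCone_closure`), so this condition need only be tested on the Castaing representation, and the
graph becomes a countable union of countable intersections of measurable sets. -/

open Finset

noncomputable section

lemma dCone_closure {d : ℕ} (K : Set (Fin d → ℝ)) : dCone (closure K) = dCone K := by
  ext y
  refine ⟨fun h x hx => h x (subset_closure hx), fun h x hx => ?_⟩
  have hc : IsClosed {x : Fin d → ℝ | 0 ≤ ∑ i, x i * y i} :=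
    isClosed_le continuous_const (by fun_prop)
  exact closure_minimal (fun x hx => h x hx) hc hx

/-- Quantitative form of interiority: `ℓ¹` and sup norm are dual to each other, so a sup-norm ball
of radius `ε` around `y` lies in the dual cone exactly when `⟨x, y⟩` dominates `ε ‖x‖₁` on `K`. -/
lemma mem_interior_dCone_iff {d : ℕ} (K : Set (Fin d → ℝ)) (y : Fin d → ℝ) :
    y ∈ interior (dCone K) ↔
      ∃ k : ℕ, ∀ x ∈ K, 1 / ((k : ℝ) + 1) * ∑ i, |x i| ≤ ∑ i, x i * y i := by
  constructor
  · intro h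
    obtain ⟨r, hr, hball⟩ := Metric.mem_nhds_iff.1 (mem_interior_iff_mem_nhds.1 h)
    obtain ⟨k, hk⟩ := exists_nat_one_div_lt hr
    refine ⟨k, fun x hx => ?_⟩
    set e : ℝ := 1 / ((k : ℝ) + 1) with he
    have he0 : 0 < e := Nat.one_div_pos_of_nat
    -- the point of the ball of radius `r` where `⟨x, ·⟩` drops by exactly `e ‖x‖₁`
    let z : Fin d → ℝ := fun i => y i - e * SignType.sign (x i)
    have hz : z ∈ Metric.ball y r := by
      rw [Metric.mem_ball, dist_pi_lt_iff hr]
      intro i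
      refine lt_of_le_of_lt ?_ hk
      have hs : |((SignType.sign (x i) : SignType) : ℝ)| ≤ 1 := by
        rcases SignType.sign (x i) with _ | _ | _ <;> simp
      rw [Real.dist_eq]
      simp only [z, sub_sub_cancel_left, abs_neg, abs_mul, abs_of_pos he0]
      nlinarith
    have h0 := hball hz x hx
    have : ∑ i, x i * z i = ∑ i, x i * y i - e * ∑ i, |x i| := by
      rw [Finset.mul_sum, ← Finset.sum_sub_distrib]
      refine Finset.sum_congr rfl fun i _ => ?_
      simp only [z, ← self_mul_sign (x i)]
      ring
    linarith
  · rintro ⟨k, hk⟩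
    have he0 : 0 < 1 / ((k : ℝ) + 1) := Nat.one_div_pos_of_nat
    rw [mem_interior_iff_mem_nhds]
    refine Filter.mem_of_superset (Metric.ball_mem_nhds y he0) fun z hz x hx => ?_
    refine (sub_nonneg.2 (hk x hx)).trans ?_
    rw [Finset.mul_sum, ← Finset.sum_sub_distrib]
    refine Finset.sum_le_sum fun i _ => ?_
    have h1 : |y i - z i| ≤ 1 / ((k : ℝ) + 1) := by
      rw [← Real.dist_eq, dist_comm]
      exact (dist_le_pi_dist z y i).trans (Metric.mem_ball.1 hz).le
    have h2 : x i * (y i - z i) ≤ |x i| * |y i - z i| := by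
      rw [← abs_mul]; exact le_abs_self _
    have h3 := mul_le_mul_of_nonneg_left h1 (abs_nonneg (x i))
    linarith

/-- if the random set `Ψ`, whose values are nonempty closed convex
cones, admits a Castaing representation `(ψ n)`, then the graph of the interior
of its dual cone belongs to the product σ-field `𝒜 ⊗ ℬ(ℝ^d)`. -/
theorem graph_interior_dualCone_measurable (d : ℕ) (hd : 1 ≤ d)
    {Ω : Type*} [MeasurableSpace Ω]
    (Ψ : Ω → Set (Fin d → ℝ))
    (hclosed : ∀ ω, IsClosed (Ψ ω))
    (hne : ∀ ω, (Ψ ω).Nonempty)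
    (hconv : ∀ ω, Convex ℝ (Ψ ω))
    (hcone : ∀ ω, ∀ x ∈ Ψ ω, ∀ a : ℝ, 0 ≤ a → a • x ∈ Ψ ω)
    (ψ : ℕ → Ω → Fin d → ℝ) (hψ : ∀ n, Measurable (ψ n))
    (hrep : ∀ ω, Ψ ω = closure (Set.range fun n => ψ n ω)) :
    MeasurableSet {p : Ω × (Fin d → ℝ) | p.2 ∈ interior (dCone (Ψ p.1))} := by
  have hset : {p : Ω × (Fin d → ℝ) | p.2 ∈ interior (dCone (Ψ p.1))} =
      ⋃ k : ℕ, ⋂ n : ℕ, {p : Ω × (Fin d → ℝ) |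
        1 / ((k : ℝ) + 1) * ∑ i, |ψ n p.1 i| ≤ ∑ i, ψ n p.1 i * p.2 i} := by
    ext p
    simp [hrep, dCone_closure, mem_interior_dCone_iff]
  rw [hset]
  refine MeasurableSet.iUnion fun k => MeasurableSet.iInter fun n => ?_
  have hm : ∀ i, Measurable fun p : Ω × (Fin d → ℝ) => ψ n p.1 i := fun i =>
    (measurable_pi_apply i).comp ((hψ n).comp measurable_fst)
  have hy : ∀ i, Measurable fun p : Ω × (Fin d → ℝ) => p.2 i := fun i =>
    (measurable_pi_apply i).comp measurable_snd
  refine measurableSet_le (measurable_const.mul ?_) ?_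
  · exact Finset.measurable_fun_sum _ fun i _ => continuous_abs.measurable.comp (hm i)
  · exact Finset.measurable_fun_sum _ fun i _ => (hm i).mul (hy i)

end
end

section
/- Measurable selection of an interior point of a random convex cone: let φ_n : Ω → ℝ^d (n ≥ 1) be 𝒜-measurable functions such that for every ω the closure C(ω) of {φ_n(ω) : n ≥ 1} is a convex cone. Then there exists an 𝒜-measurable function φ : Ω → ℝ^d such that φ(ω) ∈ C(ω) for every ω, and φ(ω) ∈ Int C(ω) for every ω with Int C(ω) ≠ ∅. -/
/-!
Take `φ ω = ∑ cₙ(ω) φₙ(ω)` with strictly positive measurable weights `cₙ` small enough for absolute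
convergence. The partial sums lie in the closed convex cone `C(ω)`, hence so does `φ ω`. If `φ ω`
were outside a nonempty `Int C(ω)`, Hahn–Banach would give a functional `f` which is strictly
smaller on `Int C(ω)` than at `φ ω`. On the cone `C(ω)` this forces `f ≤ 0` and `f (φ ω) = 0`, so
every term of `∑ cₙ(ω) f(φₙ(ω)) = 0` vanishes; by density `f = 0` on `C(ω)`, a contradiction.
-/

open Finset

noncomputable section

/-- The sum of a series with strictly positive coefficients over a sequence that is dense in a closed
convex cone lies in the cone, and in its interior if that interior is nonempty. -/
lemma hasSum_mem_and_mem_interior {E : Type*} [NormedAddCommGroup E] [NormedSpace ℝ E]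
    {C : Set E} {u : ℕ → E} {c : ℕ → ℝ} {s : E}
    (hC : C = closure (Set.range u)) (hconv : Convex ℝ C)
    (hcone : ∀ x ∈ C, ∀ a : ℝ, 0 ≤ a → a • x ∈ C)
    (hc : ∀ n, 0 < c n) (hs : HasSum (fun n => c n • u n) s) :
    s ∈ C ∧ ((interior C).Nonempty → s ∈ interior C) := by
  have hclosed : IsClosed C := hC ▸ isClosed_closure
  have hu : ∀ n, u n ∈ C := fun n => hC ▸ subset_closure ⟨n, rfl⟩
  have h0 : (0 : E) ∈ C := by simpa using hcone _ (hu 0) 0 le_rfl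
  have hadd : ∀ x ∈ C, ∀ y ∈ C, x + y ∈ C := by
    intro x hx y hy
    have h := hconv (hcone x hx 2 (by norm_num)) (hcone y hy 2 (by norm_num))
      (by norm_num : (0 : ℝ) ≤ 1 / 2) (by norm_num : (0 : ℝ) ≤ 1 / 2) (by norm_num)
    simpa [smul_smul] using h
  have hsC : s ∈ C := by
    refine hclosed.mem_of_tendsto hs (Filter.Eventually.of_forall fun t => ?_)
    exact Finset.sum_induction _ (· ∈ C) (fun x y hx hy => hadd x hx y hy) h0
      fun n _ => hcone _ (hu n) _ (hc n).le
  refine ⟨hsC, fun hne => ?_⟩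
  by_contra hsi
  obtain ⟨f, hf⟩ := geometric_hahn_banach_open_point hconv.interior isOpen_interior hsi
  have hle : ∀ y ∈ C, f y ≤ f s := by
    intro y hy
    have hy' : y ∈ closure (interior C) := by
      rw [hconv.closure_interior_eq_closure_of_nonempty_interior hne]
      exact subset_closure hy
    exact closure_minimal (fun a ha => (hf a ha).le)
      (isClosed_le f.continuous continuous_const) hy'
  -- `f` is maximal over `C` at `s`; comparing with `0` and `2 • s`, both in `C`, gives `f s = 0`.
  have hs0 : f s = 0 := by
    have h1 : f 0 ≤ f s := hle 0 h0
    have h2 := hle _ (hcone s hsC 2 (by norm_num))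
    simp only [map_zero, map_smul, smul_eq_mul] at h1 h2
    linarith
  have hsum : HasSum (fun n => -(c n * f (u n))) 0 := by
    simpa [hs0] using (f.hasSum hs).neg
  have hzero : ∀ n, f (u n) = 0 := by
    have hnonneg : ∀ n, 0 ≤ -(c n * f (u n)) := fun n => by
      have := mul_nonpos_of_nonneg_of_nonpos (hc n).le (hs0 ▸ hle _ (hu n))
      linarith
    intro n
    have := congrFun ((hasSum_zero_iff_of_nonneg hnonneg).1 hsum) n
    simpa [(hc n).ne'] using this
  have hfC : ∀ y ∈ C, f y = 0 := by
    rw [hC]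
    exact closure_minimal (Set.range_subset_iff.2 hzero)
      (isClosed_eq f.continuous continuous_const)
  obtain ⟨x, hx⟩ := hne
  have := hf x hx
  rw [hfC x (interior_subset hx), hs0] at this
  exact lt_irrefl _ this

/-- measurable selection of an interior point of a random convex
cone: if `(φn n)` are measurable and for each `ω` the closure `C ω` of
`{φn n ω : n}` is a convex cone, then there is a measurable `φ` with
`φ ω ∈ C ω` for every `ω`, and `φ ω ∈ interior (C ω)` whenever the interior is
nonempty. -/
theorem measurable_interior_selector (d : ℕ) (hd : 1 ≤ d)
    {Ω : Type*} [MeasurableSpace Ω]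
    (φn : ℕ → Ω → Fin d → ℝ) (hφn : ∀ n, Measurable (φn n))
    (hconv : ∀ ω, Convex ℝ (closure (Set.range fun n => φn n ω)))
    (hcone : ∀ ω, ∀ x ∈ closure (Set.range fun n => φn n ω), ∀ a : ℝ, 0 ≤ a →
      a • x ∈ closure (Set.range fun n => φn n ω)) :
    ∃ φ : Ω → Fin d → ℝ, Measurable φ ∧
      (∀ ω, φ ω ∈ closure (Set.range fun n => φn n ω)) ∧
      ∀ ω, (interior (closure (Set.range fun n => φn n ω))).Nonempty →
        φ ω ∈ interior (closure (Set.range fun n => φn n ω)) := by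
  let c : ℕ → Ω → ℝ := fun n ω => (1 / 2) ^ n / (1 + ‖φn n ω‖)
  have hc : ∀ n ω, 0 < c n ω := fun n ω => by positivity
  have hsummable : ∀ ω, Summable fun n => c n ω • φn n ω := by
    intro ω
    refine Summable.of_norm_bounded summable_geometric_two fun n => ?_
    rw [norm_smul, Real.norm_of_nonneg (hc n ω).le, div_mul_eq_mul_div,
      div_le_iff₀ (by positivity)]
    gcongr
    linarith
  have hcmeas : ∀ n, Measurable (c n) := fun n =>
    measurable_const.div (measurable_const.add (hφn n).norm)
  have key := fun ω => hasSum_mem_and_mem_interior rfl (hconv ω) (hcone ω)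
    (fun n => hc n ω) (hsummable ω).hasSum
  refine ⟨fun ω => ∑' n, c n ω • φn n ω, ?_, fun ω => (key ω).1, fun ω => (key ω).2⟩
  refine measurable_of_tendsto_metrizable
    (f := fun N ω => ∑ n ∈ Finset.range N, c n ω • φn n ω) (fun N => ?_) ?_
  · exact Finset.measurable_fun_sum _ fun n _ => (hcmeas n).smul (hφn n)
  · exact tendsto_pi_nhds.2 fun ω => (hsummable ω).hasSum.tendsto_sum_nat

end
end

section
/- Existence of a bounded measurable strictly positive price selector: let (Ω,𝒜) be a measurable space and K : Ω → 2^{ℝ^d} an 𝒜-measurable random set (i.e. {ω : K(ω) ∩ C ≠ ∅} ∈ 𝒜 for every closed C ⊂ ℝ^d) whose values are closed convex cones with Int K*(ω) ≠ ∅ for every ω. Then there exists a bounded 𝒜-measurable function Y : Ω → ℝ^d with Y(ω) ∈ Int K*(ω) for every ω. -/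
/-!
A vector `y` is interior to the dual cone of a closed cone `K` exactly when `x ↦ ⟨x, y⟩` is positive
on the compact base `K ∩ {‖x‖ = 1}` (`mem_interior_dCone_iff`). Hence, for fixed `y`, the event
`y ∈ Int K*(ω)` is the complement of the event that `K(ω)` hits the closed set
`{x | ‖x‖ = 1 ∧ ⟨x, y⟩ ≤ 0}`, so it is measurable. Normalizing a countable dense sequence of `ℝ^d`
into the unit ball gives vectors `r n`, some of which lie in the open nonempty cone `Int K*(ω)`, and
`Y ω = r n` for the least such `n` is a bounded measurable selector.
-/

open Finset

noncomputable section

/-- The part of the unit sphere (of the sup norm) on which the functional `⟨·, y⟩` is nonpositive. -/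
def nonposSphere {d : ℕ} (y : Fin d → ℝ) : Set (Fin d → ℝ) :=
  {x | ‖x‖ = 1 ∧ ∑ i, x i * y i ≤ 0}

lemma isClosed_nonposSphere {d : ℕ} (y : Fin d → ℝ) : IsClosed (nonposSphere y) :=
  (isClosed_eq continuous_norm continuous_const).inter
    (isClosed_le (f := fun x : Fin d → ℝ => ∑ i, x i * y i) (by fun_prop) continuous_const)

lemma mem_interior_dCone_iff_s16 {d : ℕ} {K : Set (Fin d → ℝ)} (hK : IsClosed K)
    (hcone : ∀ x ∈ K, ∀ a : ℝ, 0 ≤ a → a • x ∈ K) (y : Fin d → ℝ) :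
    y ∈ interior (dCone K) ↔ ¬ (K ∩ nonposSphere y).Nonempty := by
  rw [mem_interior_iff_mem_nhds]
  constructor
  · rintro hy ⟨x, hxK, hx1, hxy⟩
    -- Moving from `y` slightly in the direction `-x` stays in the dual cone, so `⟨x, y⟩ > 0`.
    have hcont : Filter.Tendsto (fun t : ℝ => y - t • x) (nhdsWithin 0 (Set.Ioi 0)) (nhds y) := by
      have h : Continuous (fun t : ℝ => y - t • x) := by fun_prop
      simpa using (h.tendsto 0).mono_left nhdsWithin_le_nhds
    obtain ⟨t, ht, ht0⟩ := ((hcont.eventually hy).and self_mem_nhdsWithin).exists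
    have ht0 : 0 < t := ht0
    have h1 : 0 ≤ ∑ i, x i * (y - t • x) i := ht x hxK
    have h2 : ∑ i, x i * (y - t • x) i = ∑ i, x i * y i - t * ∑ i, x i * x i := by
      rw [Finset.mul_sum, ← Finset.sum_sub_distrib]
      refine Finset.sum_congr rfl fun i _ => ?_
      simp only [Pi.sub_apply, Pi.smul_apply, smul_eq_mul]
      ring
    have h3 : 0 < ∑ i, x i * x i := by
      refine lt_of_le_of_ne (Finset.sum_nonneg fun i _ => mul_self_nonneg _) fun h => ?_
      rw [eq_comm, Finset.sum_eq_zero_iff_of_nonneg fun i _ => mul_self_nonneg _] at h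
      have : x = 0 := funext fun i => mul_self_eq_zero.1 (h i (Finset.mem_univ i))
      simp [this] at hx1
    nlinarith [mul_pos ht0 h3]
  · intro h
    have hcomp : IsCompact (K ∩ Metric.sphere (0 : Fin d → ℝ) 1) :=
      (isCompact_sphere _ _).inter_left hK
    have hev : ∀ᶠ z in nhds y, ∀ x ∈ K ∩ Metric.sphere (0 : Fin d → ℝ) 1,
        0 < ∑ i, x i * z i := by
      refine hcomp.eventually_forall_of_forall_eventually fun x hx => ?_
      have hc : Continuous fun p : (Fin d → ℝ) × (Fin d → ℝ) => ∑ i, p.2 i * p.1 i := by fun_prop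
      refine hc.continuousAt.eventually (lt_mem_nhds ?_)
      by_contra hle
      exact h ⟨x, hx.1, mem_sphere_zero_iff_norm.1 hx.2, not_lt.1 hle⟩
    filter_upwards [hev] with z hz x hx
    rcases eq_or_ne x 0 with rfl | hx0
    · simp
    · have hn : 0 < ‖x‖ := norm_pos_iff.2 hx0
      have := hz (‖x‖⁻¹ • x) ⟨hcone x hx _ (inv_nonneg.2 hn.le), by
        simp [norm_smul, hn.ne']⟩
      simp only [Pi.smul_apply, smul_eq_mul, mul_assoc, ← Finset.mul_sum] at this
      exact (pos_of_mul_pos_right this (inv_nonneg.2 hn.le)).le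

/-- The set `nonposSphere y` only depends on the ray spanned by `y`, so the dense sequence can be
rescaled into the unit ball. -/
lemma nonposSphere_smul {d : ℕ} (y : Fin d → ℝ) {a : ℝ} (ha : 0 < a) :
    nonposSphere (a • y) = nonposSphere y := by
  ext x
  have : ∑ i, x i * (a • y) i = a * ∑ i, x i * y i := by
    simp [Finset.mul_sum, mul_left_comm]
  simp only [nonposSphere, Set.mem_ofPred_eq, this, mul_nonpos_iff_pos_imp_nonpos]
  constructor
  · rintro ⟨h1, h2, -⟩
    exact ⟨h1, h2 ha⟩
  · rintro ⟨h1, h2⟩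
    exact ⟨h1, fun _ => h2, fun _ => ha.le⟩

/-- existence of a bounded measurable strictly positive price
selector: if `K` is an `𝒜`-measurable random set whose values are closed convex
cones with `Int K*(ω) ≠ ∅` for every `ω`, then there is a bounded
`𝒜`-measurable `Y` with `Y ω ∈ Int K*(ω)` for every `ω`. -/
theorem bounded_measurable_interior_dual_selector (d : ℕ) (hd : 1 ≤ d)
    {Ω : Type*} [MeasurableSpace Ω]
    (K : Ω → Set (Fin d → ℝ))
    (hKmeas : ∀ C : Set (Fin d → ℝ), IsClosed C →
      MeasurableSet {ω | (K ω ∩ C).Nonempty})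
    (hKclosed : ∀ ω, IsClosed (K ω))
    (hKconv : ∀ ω, Convex ℝ (K ω))
    (hKcone : ∀ ω, ∀ x ∈ K ω, ∀ a : ℝ, 0 ≤ a → a • x ∈ K ω)
    (hKint : ∀ ω, (interior (dCone (K ω))).Nonempty) :
    ∃ Y : Ω → Fin d → ℝ, Measurable Y ∧ (∃ M : ℝ, ∀ ω i, |Y ω i| ≤ M) ∧
      ∀ ω, Y ω ∈ interior (dCone (K ω)) := by
  classical
  let q : ℕ → Fin d → ℝ := TopologicalSpace.denseSeq (Fin d → ℝ)
  let r : ℕ → Fin d → ℝ := fun n => (1 + ‖q n‖)⁻¹ • q n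
  have hpos : ∀ n, 0 < 1 + ‖q n‖ := fun n => by positivity
  have hr : ∀ n, ‖r n‖ ≤ 1 := fun n => by
    simp only [r, norm_smul, norm_inv, Real.norm_of_nonneg (hpos n).le]
    rw [inv_mul_le_iff₀ (hpos n)]
    linarith
  have hex : ∀ ω, ∃ n, ¬ (K ω ∩ nonposSphere (r n)).Nonempty := fun ω => by
    obtain ⟨n, hn⟩ := (TopologicalSpace.denseRange_denseSeq (Fin d → ℝ)).exists_mem_open
      isOpen_interior (hKint ω)
    refine ⟨n, ?_⟩
    rw [nonposSphere_smul _ (inv_pos.2 (hpos n))]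
    exact (mem_interior_dCone_iff_s16 (hKclosed ω) (hKcone ω) _).1 hn
  refine ⟨fun ω => r (Nat.find (hex ω)), ?_, ⟨1, fun ω i => ?_⟩, fun ω => ?_⟩
  · exact (measurable_from_nat (f := r)).comp
      (measurable_find hex fun n => (hKmeas _ (isClosed_nonposSphere (r n))).compl)
  · exact (norm_le_pi_norm (r (Nat.find (hex ω))) i).trans (hr _)
  · exact (mem_interior_dCone_iff_s16 (hKclosed ω) (hKcone ω) _).2 (Nat.find_spec (hex ω))

end
end
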